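/- arXiv:1803.09266 — 12 statements merged into one kernel-verified Lean document; each statement's English description precedes it below -/
import Mathlib

section
/- Let n₁, n₂ be positive integers, V₁ = {1,…,n₁}, V₂ = {1,…,n₂}, E ⊆ V₁ × V₂, and let q : E → ℝ, a : V₁ → ℝ, b : V₂ → ℝ, c ∈ ℝ. Define S = {(x,y,w) ∈ [0,1]^{n₁+n₂+|E|} : Σ_{(i,j)∈E} q_{ij} w_{ij} + Σ_{i∈V₁} a_i x_i + Σ_{j∈V₂} b_j y_j + c = 0 and w_{ij} = x_i y_j for all (i,j) ∈ E}. If (x̄,ȳ,w̄) is an extreme point of S, then there exists a set U ⊆ V₁ ∪ V₂ of one of the following forms: (a) U = {i₀, j₀} with (i₀,j₀) ∈ E, or (b) U = {i₀} with i₀ ∈ V₁ incident to no edge of E, or (c) U = {j₀} with j₀ ∈ V₂ incident to no edge of E, such that x̄_i ∈ {0,1} for every i ∈ V₁ \ U and ȳ_j ∈ {0,1} for every j ∈ V₂ \ U. -/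
open Filter Topology in
lemma bbp_eps (x u : ℝ) (hx : x ∈ Set.Icc (0:ℝ) 1) (h : x ∈ ({0, 1} : Set ℝ) → u = 0) :
    ∀ᶠ t in 𝓝 (0:ℝ), x + t * u ∈ Set.Icc (0:ℝ) 1 := by
  by_cases hf : x ∈ ({0, 1} : Set ℝ)
  · simp only [h hf, mul_zero, add_zero]
    exact Eventually.of_forall fun _ => hx
  · have h0 : x ≠ 0 := fun h => hf (by simp [h])
    have h1 : x ≠ 1 := fun h => hf (by simp [h])
    have hc : Tendsto (fun t : ℝ => x + t * u) (𝓝 0) (𝓝 x) := by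
      have : Continuous (fun t : ℝ => x + t * u) := by fun_prop
      simpa using this.tendsto 0
    exact hc (Icc_mem_nhds (lt_of_le_of_ne hx.1 (Ne.symm h0)) (lt_of_le_of_ne hx.2 h1))

def bbpSet (n₁ n₂ : ℕ) (E : Finset (Fin n₁ × Fin n₂)) (q : Fin n₁ × Fin n₂ → ℝ)
    (a : Fin n₁ → ℝ) (b : Fin n₂ → ℝ) (c : ℝ) :
    Set ((Fin n₁ → ℝ) × (Fin n₂ → ℝ) × (↥E → ℝ)) :=
  {p | (∀ i, p.1 i ∈ Set.Icc (0:ℝ) 1) ∧ (∀ j, p.2.1 j ∈ Set.Icc (0:ℝ) 1) ∧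
        (∀ e : ↥E, p.2.2 e ∈ Set.Icc (0:ℝ) 1) ∧
        (∑ e : ↥E, q e.1 * p.2.2 e) + (∑ i, a i * p.1 i) + (∑ j, b j * p.2.1 j) + c = 0 ∧
        ∀ e : ↥E, p.2.2 e = p.1 (e : Fin n₁ × Fin n₂).1 * p.2.1 (e : Fin n₁ × Fin n₂).2}

/-- The differential of the row at `p`. -/
def bbpL {n₁ n₂ : ℕ} (E : Finset (Fin n₁ × Fin n₂)) (q : Fin n₁ × Fin n₂ → ℝ)
    (a : Fin n₁ → ℝ) (b : Fin n₂ → ℝ) (x : Fin n₁ → ℝ) (y : Fin n₂ → ℝ)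
    (u : Fin n₁ → ℝ) (v : Fin n₂ → ℝ) : ℝ :=
  (∑ e : ↥E, q e.1 * (u e.1.1 * y e.1.2 + x e.1.1 * v e.1.2)) + (∑ i, a i * u i) + (∑ j, b j * v j)

lemma bbpL_comb {n₁ n₂ : ℕ} (E : Finset (Fin n₁ × Fin n₂)) (q : Fin n₁ × Fin n₂ → ℝ)
    (a : Fin n₁ → ℝ) (b : Fin n₂ → ℝ) (x : Fin n₁ → ℝ) (y : Fin n₂ → ℝ)
    (u u' : Fin n₁ → ℝ) (v v' : Fin n₂ → ℝ) (s t : ℝ) :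
    bbpL E q a b x y (s • u + t • u') (s • v + t • v') =
      s * bbpL E q a b x y u v + t * bbpL E q a b x y u' v' := by
  simp only [bbpL, mul_add, Finset.mul_sum, Pi.add_apply, Pi.smul_apply, smul_eq_mul,
    Finset.sum_add_distrib, add_mul]
  have e1 : ∀ f g : ↥E → ℝ, (∀ e, f e = g e) → ∑ e, f e = ∑ e, g e :=
    fun f g h => Finset.sum_congr rfl fun e _ => h e
  simp only [mul_left_comm, mul_assoc]
  ring

lemma bbp_dir {n₁ n₂ : ℕ} {E : Finset (Fin n₁ × Fin n₂)} {q : Fin n₁ × Fin n₂ → ℝ}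
    {a : Fin n₁ → ℝ} {b : Fin n₂ → ℝ} {c : ℝ}
    {p : (Fin n₁ → ℝ) × (Fin n₂ → ℝ) × (↥E → ℝ)}
    (hp : p ∈ Set.extremePoints ℝ (bbpSet n₁ n₂ E q a b c))
    (u : Fin n₁ → ℝ) (v : Fin n₂ → ℝ)
    (hu : ∀ i, p.1 i ∈ ({0, 1} : Set ℝ) → u i = 0)
    (hv : ∀ j, p.2.1 j ∈ ({0, 1} : Set ℝ) → v j = 0)
    (huv : ∀ i j, (i, j) ∈ E → u i * v j = 0)
    (hL : bbpL E q a b p.1 p.2.1 u v = 0) : u = 0 ∧ v = 0 := by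
  obtain ⟨x, y, w⟩ := p
  rw [mem_extremePoints] at hp
  obtain ⟨⟨hx, hy, hw, hs, hm⟩, hext⟩ := hp
  dsimp only at *
  have A : ∀ᶠ t in nhds (0:ℝ), (∀ i, x i + t * u i ∈ Set.Icc (0:ℝ) 1) ∧
      (∀ j, y j + t * v j ∈ Set.Icc (0:ℝ) 1) :=
    (Filter.eventually_all.2 fun i => bbp_eps _ _ (hx i) (hu i)).and
      (Filter.eventually_all.2 fun i => bbp_eps _ _ (hy i) (hv i))
  obtain ⟨r, hr, hA⟩ := Metric.eventually_nhds_iff.1 A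
  let P : ℝ → (Fin n₁ → ℝ) × (Fin n₂ → ℝ) × (↥E → ℝ) := fun t =>
    (fun i => x i + t * u i, fun j => y j + t * v j,
      fun e => w e + t * (u e.1.1 * y e.1.2 + x e.1.1 * v e.1.2))
  have hP : ∀ t : ℝ, |t| < r → P t ∈ bbpSet n₁ n₂ E q a b c := by
    intro t ht
    obtain ⟨h1, h2⟩ := hA (y := t) (by simpa using ht)
    have hmul : ∀ e : ↥E, w e + t * (u e.1.1 * y e.1.2 + x e.1.1 * v e.1.2) =
        (x e.1.1 + t * u e.1.1) * (y e.1.2 + t * v e.1.2) := by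
      intro e
      have := huv e.1.1 e.1.2 e.2
      rw [hm e]
      linear_combination (-t^2) * this
    refine ⟨h1, h2, ?_, ?_, hmul⟩
    · intro e
      show w e + t * (u e.1.1 * y e.1.2 + x e.1.1 * v e.1.2) ∈ _
      rw [hmul]
      exact ⟨mul_nonneg (h1 _).1 (h2 _).1, mul_le_one₀ (h1 _).2 (h2 _).1 (h2 _).2⟩
    · show (∑ e : ↥E, q e.1 * (w e + t * (u e.1.1 * y e.1.2 + x e.1.1 * v e.1.2))) +
        (∑ i, a i * (x i + t * u i)) + (∑ j, b j * (y j + t * v j)) + c = 0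
      have : ∀ {ι : Type} [Fintype ι] (f g h : ι → ℝ), ∑ i, f i * (g i + t * h i) =
          ∑ i, f i * g i + t * ∑ i, f i * h i := by
        intro ι _ f g h
        rw [Finset.mul_sum, ← Finset.sum_add_distrib]
        exact Finset.sum_congr rfl fun i _ => by ring
      rw [this, this, this]
      unfold bbpL at hL
      linear_combination hs + t * hL
  have hr2 : |r / 2| < r := by rw [abs_of_pos (by linarith)]; linarith
  have hr2' : |-(r / 2)| < r := by rwa [abs_neg]
  have key := (hext _ (hP _ hr2) _ (hP _ hr2') ⟨1/2, 1/2, by norm_num, by norm_num, by norm_num, by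
    ext <;> simp [P] <;> ring⟩).1
  have hne : r / 2 ≠ 0 := by positivity
  constructor
  · funext i
    have := congrFun (congrArg Prod.fst key) i
    have h : r / 2 * u i = 0 := by simpa [P] using this
    simpa [hne] using (mul_eq_zero.1 h).resolve_left hne
  · funext i
    have := congrFun (congrArg (fun z => z.2.1) key) i
    have h : r / 2 * v i = 0 := by simpa [P] using this
    simpa [hne] using (mul_eq_zero.1 h).resolve_left hne

lemma bbp_dep {n₁ n₂ : ℕ} {E : Finset (Fin n₁ × Fin n₂)} {q : Fin n₁ × Fin n₂ → ℝ}
    {a : Fin n₁ → ℝ} {b : Fin n₂ → ℝ} {c : ℝ}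
    {p : (Fin n₁ → ℝ) × (Fin n₂ → ℝ) × (↥E → ℝ)}
    (hp : p ∈ Set.extremePoints ℝ (bbpSet n₁ n₂ E q a b c))
    (u u' : Fin n₁ → ℝ) (v v' : Fin n₂ → ℝ)
    (hu : ∀ i, p.1 i ∈ ({0, 1} : Set ℝ) → u i = 0 ∧ u' i = 0)
    (hv : ∀ j, p.2.1 j ∈ ({0, 1} : Set ℝ) → v j = 0 ∧ v' j = 0)
    (huv : ∀ i j, (i, j) ∈ E → (u i = 0 ∧ u' i = 0) ∨ (v j = 0 ∧ v' j = 0)) :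
    ∃ s t : ℝ, (s ≠ 0 ∨ t ≠ 0) ∧ s • u + t • u' = 0 ∧ s • v + t • v' = 0 := by
  have H : ∀ s t : ℝ, s * bbpL E q a b p.1 p.2.1 u v + t * bbpL E q a b p.1 p.2.1 u' v' = 0 →
      s • u + t • u' = 0 ∧ s • v + t • v' = 0 := by
    intro s t h
    apply bbp_dir hp
    · intro i hi; simp [hu i hi]
    · intro i hi; simp [hv i hi]
    · intro i j hij
      rcases huv i j hij with h | h <;> simp [h]
    · rw [bbpL_comb, h]
  by_cases h0 : bbpL E q a b p.1 p.2.1 u v = 0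
  · exact ⟨1, 0, by simp, H 1 0 (by simp [h0])⟩
  · exact ⟨bbpL E q a b p.1 p.2.1 u' v', - bbpL E q a b p.1 p.2.1 u v, by simp [h0],
      H _ _ (by ring)⟩

/-- At any extreme point of the single-row BBP set
`S = {(x,y,w) ∈ [0,1]^{n₁+n₂+|E|} : Σ q_{ij} w_{ij} + Σ a_i x_i + Σ b_j y_j + c = 0,
 w_{ij} = x_i y_j}`, all but the coordinates indexed by a set `U` — which is either a pair
`{i₀,j₀}` with `(i₀,j₀) ∈ E`, or an isolated node of `V₁`, or an isolated node of `V₂` —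
take values in `{0,1}`. -/
theorem extreme_points_of_single_row_BBP (n₁ n₂ : ℕ) (hn₁ : 0 < n₁) (hn₂ : 0 < n₂)
    (E : Finset (Fin n₁ × Fin n₂)) (q : Fin n₁ × Fin n₂ → ℝ)
    (a : Fin n₁ → ℝ) (b : Fin n₂ → ℝ) (c : ℝ)
    (S : Set ((Fin n₁ → ℝ) × (Fin n₂ → ℝ) × (↥E → ℝ)))
    (hS : S = {p | (∀ i, p.1 i ∈ Set.Icc (0:ℝ) 1) ∧ (∀ j, p.2.1 j ∈ Set.Icc (0:ℝ) 1) ∧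
        (∀ e : ↥E, p.2.2 e ∈ Set.Icc (0:ℝ) 1) ∧
        (∑ e : ↥E, q e.1 * p.2.2 e) + (∑ i, a i * p.1 i) + (∑ j, b j * p.2.1 j) + c = 0 ∧
        ∀ e : ↥E, p.2.2 e = p.1 (e : Fin n₁ × Fin n₂).1 * p.2.1 (e : Fin n₁ × Fin n₂).2})
    (p : (Fin n₁ → ℝ) × (Fin n₂ → ℝ) × (↥E → ℝ))
    (hp : p ∈ Set.extremePoints ℝ S) :
    (∃ i₀ j₀, (i₀, j₀) ∈ E ∧
      (∀ i, i ≠ i₀ → p.1 i ∈ ({0, 1} : Set ℝ)) ∧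
      (∀ j, j ≠ j₀ → p.2.1 j ∈ ({0, 1} : Set ℝ))) ∨
    (∃ i₀ : Fin n₁, (∀ j, (i₀, j) ∉ E) ∧
      (∀ i, i ≠ i₀ → p.1 i ∈ ({0, 1} : Set ℝ)) ∧
      (∀ j, p.2.1 j ∈ ({0, 1} : Set ℝ))) ∨
    (∃ j₀ : Fin n₂, (∀ i, (i, j₀) ∉ E) ∧
      (∀ i, p.1 i ∈ ({0, 1} : Set ℝ)) ∧
      (∀ j, j ≠ j₀ → p.2.1 j ∈ ({0, 1} : Set ℝ))) := by
  have hS' : S = bbpSet n₁ n₂ E q a b c := hS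
  rw [hS'] at hp
  have hX : ∀ i i', p.1 i ∉ ({0, 1} : Set ℝ) → p.1 i' ∉ ({0, 1} : Set ℝ) → i = i' := by
    intro i i' hi hi'
    by_contra hne
    obtain ⟨s, t, hst, h, -⟩ := bbp_dep hp (Pi.single i 1) (Pi.single i' 1) 0 0
      (by
        intro k hk
        have h1 : k ≠ i := by rintro rfl; exact hi hk
        have h2 : k ≠ i' := by rintro rfl; exact hi' hk
        simp [h1, h2]) (by simp) (by simp)
    have e1 := congrFun h i
    have e2 := congrFun h i'
    simp [hne, Ne.symm hne] at e1 e2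
    tauto
  have hY : ∀ i i', p.2.1 i ∉ ({0, 1} : Set ℝ) → p.2.1 i' ∉ ({0, 1} : Set ℝ) → i = i' := by
    intro i i' hi hi'
    by_contra hne
    obtain ⟨s, t, hst, -, h⟩ := bbp_dep hp 0 0 (Pi.single i 1) (Pi.single i' 1) (by simp)
      (by
        intro k hk
        have h1 : k ≠ i := by rintro rfl; exact hi hk
        have h2 : k ≠ i' := by rintro rfl; exact hi' hk
        simp [h1, h2]) (by simp)
    have e1 := congrFun h i
    have e2 := congrFun h i'
    simp [hne, Ne.symm hne] at e1 e2
    tauto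
  have hXY : ∀ i j, p.1 i ∉ ({0, 1} : Set ℝ) → p.2.1 j ∉ ({0, 1} : Set ℝ) → (i, j) ∈ E := by
    intro i j hi hj
    by_contra hne
    obtain ⟨s, t, hst, h, h'⟩ := bbp_dep hp (Pi.single i 1) 0 0 (Pi.single j 1)
      (by
        intro k hk
        have h1 : k ≠ i := by rintro rfl; exact hi hk
        simp [h1])
      (by
        intro k hk
        have h1 : k ≠ j := by rintro rfl; exact hj hk
        simp [h1])
      (by
        intro k l hkl
        by_cases h1 : k = i
        · have h2 : l ≠ j := by rintro rfl; subst h1; exact hne hkl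
          simp [h2]
        · simp [h1])
    have e1 := congrFun h i
    have e2 := congrFun h' j
    simp at e1 e2
    tauto
  by_cases fy : ∃ j, p.2.1 j ∉ ({0, 1} : Set ℝ)
  · obtain ⟨j, hj⟩ := fy
    have hjj : ∀ j', j' ≠ j → p.2.1 j' ∈ ({0, 1} : Set ℝ) := fun j' h => by
      by_contra h'; exact h (hY _ _ h' hj)
    by_cases fx : ∃ i, p.1 i ∉ ({0, 1} : Set ℝ)
    · obtain ⟨i, hi⟩ := fx
      exact Or.inl ⟨i, j, hXY i j hi hj, fun i' h => by
        by_contra h'; exact h (hX _ _ h' hi), hjj⟩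
    · have fx' : ∀ i, p.1 i ∈ ({0, 1} : Set ℝ) := fun i => by
        by_contra h; exact fx ⟨i, h⟩
      by_cases hE : ∃ i, (i, j) ∈ E
      · obtain ⟨i, hi⟩ := hE
        exact Or.inl ⟨i, j, hi, fun i _ => fx' i, hjj⟩
      · exact Or.inr (Or.inr ⟨j, fun i h => hE ⟨i, h⟩, fx', hjj⟩)
  · have fy' : ∀ i, p.2.1 i ∈ ({0, 1} : Set ℝ) := fun i => by
      by_contra h; exact fy ⟨i, h⟩
    obtain ⟨i, hii⟩ : ∃ i, ∀ i', i' ≠ i → p.1 i' ∈ ({0, 1} : Set ℝ) := by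
      by_cases fx : ∃ i, p.1 i ∉ ({0, 1} : Set ℝ)
      · obtain ⟨i, hi⟩ := fx
        exact ⟨i, fun i' h => by by_contra h'; exact h (hX _ _ h' hi)⟩
      · exact ⟨⟨0, hn₁⟩, fun i' _ => by by_contra h; exact fx ⟨i', h⟩⟩
    by_cases hE : ∃ j, (i, j) ∈ E
    · obtain ⟨j, hj⟩ := hE
      exact Or.inl ⟨i, j, hj, hii, fun j _ => fy' j⟩
    · exact Or.inr (Or.inl ⟨i, fun j h => hE ⟨j, h⟩, hii, fy'⟩)
end

section
/- Let n₁, n₂ be positive integers, V₁ = {1,…,n₁}, V₂ = {1,…,n₂}, E ⊆ V₁ × V₂, and let q : E → ℝ, a : V₁ → ℝ, b : V₂ → ℝ, c ∈ ℝ. Define S = {(x,y,w) ∈ [0,1]^{n₁+n₂+|E|} : Σ_{(i,j)∈E} q_{ij} w_{ij} + Σ_{i∈V₁} a_i x_i + Σ_{j∈V₂} b_j y_j + c = 0 and w_{ij} = x_i y_j for all (i,j) ∈ E}. For each set U ⊆ V₁ ∪ V₂ of one of the forms (a) U = {i₀, j₀} with (i₀,j₀) ∈ E, (b) U = {i₀}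 with i₀ ∈ V₁ incident to no edge of E, (c) U = {j₀} with j₀ ∈ V₂ incident to no edge of E, and each 0/1 assignment σ : (V₁ ∪ V₂) \ U → {0,1}, let S_{U,σ} = {(x,y,w) ∈ S : x_i = σ(i) for all i ∈ V₁ \ U, y_j = σ(j) for all j ∈ V₂ \ U}. Then the convex hull of S equals the convex hull of the union of all the sets S_{U,σ}. -/
open Finset in
theorem bbp_hit {ι : Type*} [Fintype ι] (z d : ι → ℝ) (hz : ∀ u, z u ∈ Set.Icc (0:ℝ) 1)
    (hd : ∀ u, d u ≠ 0 → z u ≠ 0 ∧ z u ≠ 1) (hne : ∃ u, d u ≠ 0) :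
    ∃ t : ℝ, 0 < t ∧ (∀ u, (z + t • d) u ∈ Set.Icc (0:ℝ) 1) ∧
      {u | (z + t • d) u ≠ 0 ∧ (z + t • d) u ≠ 1} ⊂ {u | z u ≠ 0 ∧ z u ≠ 1} := by
  classical
  let r : ι → ℝ := fun u => if 0 < d u then (1 - z u) / d u else z u / (- d u)
  obtain ⟨u₀, hu₀, hmin⟩ := Finset.exists_min_image (univ.filter fun u => d u ≠ 0) r
    (by obtain ⟨u, hu⟩ := hne; exact ⟨u, by simpa using hu⟩)
  have hu₀' : d u₀ ≠ 0 := by simpa using hu₀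
  have hpos : ∀ u, d u ≠ 0 → 0 < z u ∧ z u < 1 := fun u hu =>
    ⟨lt_of_le_of_ne (hz u).1 (Ne.symm (hd u hu).1), lt_of_le_of_ne (hz u).2 (hd u hu).2⟩
  have hr0 : 0 < r u₀ := by
    obtain ⟨h0, h1⟩ := hpos u₀ hu₀'
    simp only [r]
    split_ifs with h
    · exact div_pos (by linarith) h
    · have : d u₀ < 0 := lt_of_le_of_ne (not_lt.1 h) hu₀'
      exact div_pos h0 (by linarith)
  have hhit : (z + r u₀ • d) u₀ = 0 ∨ (z + r u₀ • d) u₀ = 1 := by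
    simp only [Pi.add_apply, Pi.smul_apply, smul_eq_mul, r]
    split_ifs with h
    · right; field_simp; ring
    · left; field_simp; ring
  refine ⟨r u₀, hr0, ?_, ?_, ?_⟩
  · intro u
    simp only [Pi.add_apply, Pi.smul_apply, smul_eq_mul]
    by_cases hu : d u = 0
    · simpa [hu] using hz u
    obtain ⟨h0, h1⟩ := hpos u hu
    have hm := hmin u (by simpa using hu)
    by_cases h : 0 < d u
    · have e : r u = (1 - z u) / d u := if_pos h
      rw [e, le_div_iff₀ h] at hm
      constructor
      · have := mul_pos hr0 h; linarith
      · linarith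
    · have h' : d u < 0 := lt_of_le_of_ne (not_lt.1 h) hu
      have e : r u = z u / (- d u) := if_neg h
      rw [e, le_div_iff₀ (by linarith)] at hm
      constructor
      · linarith
      · have := mul_pos hr0 (neg_pos.2 h'); linarith
  · intro u hu
    by_cases h : d u = 0
    · simpa [h] using hu
    · exact hd u h
  · intro hsub
    have := hsub (hd u₀ hu₀')
    rcases hhit with h | h
    · exact this.1 h
    · exact this.2 h

section
variable {n₁ n₂ : ℕ} (E : Finset (Fin n₁ × Fin n₂))

def bbpG (z : Fin n₁ ⊕ Fin n₂ → ℝ) : (Fin n₁ → ℝ) × (Fin n₂ → ℝ) × (↥E → ℝ) :=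
  (fun i => z (Sum.inl i), fun j => z (Sum.inr j),
    fun e => z (Sum.inl e.1.1) * z (Sum.inr e.1.2))

def bbpH (z : Fin n₁ ⊕ Fin n₂ → ℝ) :
    (Fin n₁ ⊕ Fin n₂ → ℝ) →ₗ[ℝ] (Fin n₁ → ℝ) × (Fin n₂ → ℝ) × (↥E → ℝ) where
  toFun d := (fun i => d (Sum.inl i), fun j => d (Sum.inr j),
    fun e => z (Sum.inl e.1.1) * d (Sum.inr e.1.2) + d (Sum.inl e.1.1) * z (Sum.inr e.1.2))
  map_add' d d' := by
    refine Prod.ext rfl (Prod.ext rfl ?_)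
    funext e; simp; ring
  map_smul' t d := by
    refine Prod.ext rfl (Prod.ext rfl ?_)
    funext e; simp; ring

def bbpPhi (q : Fin n₁ × Fin n₂ → ℝ) (a : Fin n₁ → ℝ) (b : Fin n₂ → ℝ) :
    ((Fin n₁ → ℝ) × (Fin n₂ → ℝ) × (↥E → ℝ)) →ₗ[ℝ] ℝ where
  toFun p := (∑ e : ↥E, q e.1 * p.2.2 e) + (∑ i, a i * p.1 i) + (∑ j, b j * p.2.1 j)
  map_add' p p' := by
    simp only [Prod.fst_add, Prod.snd_add, Pi.add_apply, mul_add, Finset.sum_add_distrib]; ring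
  map_smul' t p := by
    simp only [Prod.smul_fst, Prod.smul_snd, Pi.smul_apply, smul_eq_mul, mul_left_comm _ t,
      ← Finset.mul_sum, RingHom.id_apply]; ring

theorem bbpG_add (z d : Fin n₁ ⊕ Fin n₂ → ℝ) (t : ℝ)
    (h : ∀ e ∈ E, d (Sum.inl e.1) * d (Sum.inr e.2) = 0) :
    bbpG E (z + t • d) = bbpG E z + t • bbpH E z d := by
  refine Prod.ext rfl (Prod.ext rfl ?_)
  funext e
  have := h e.1 e.2
  simp [bbpG, bbpH]
  linear_combination t ^ 2 * this

theorem bbp_hull (q : Fin n₁ × Fin n₂ → ℝ) (a : Fin n₁ → ℝ) (b : Fin n₂ → ℝ) (c : ℝ)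
    (T : Set ((Fin n₁ → ℝ) × (Fin n₂ → ℝ) × (↥E → ℝ)))
    (hT : ∀ z, (∀ u, z u ∈ Set.Icc (0:ℝ) 1) → bbpPhi E q a b (bbpG E z) + c = 0 →
      (∀ u v, (z u ≠ 0 ∧ z u ≠ 1) → (z v ≠ 0 ∧ z v ≠ 1) → u ≠ v →
        ∃ e ∈ E, (u = Sum.inl e.1 ∧ v = Sum.inr e.2) ∨ (v = Sum.inl e.1 ∧ u = Sum.inr e.2)) →
      bbpG E z ∈ T) (N : ℕ) :
    ∀ z : Fin n₁ ⊕ Fin n₂ → ℝ, {u | z u ≠ 0 ∧ z u ≠ 1}.ncard = N →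
      (∀ u, z u ∈ Set.Icc (0:ℝ) 1) → bbpPhi E q a b (bbpG E z) + c = 0 →
      bbpG E z ∈ convexHull ℝ T := by
  induction N using Nat.strong_induction_on with
  | _ N ih =>
  intro z hN hz hf
  by_cases hadj : ∀ u v, (z u ≠ 0 ∧ z u ≠ 1) → (z v ≠ 0 ∧ z v ≠ 1) → u ≠ v →
        ∃ e ∈ E, (u = Sum.inl e.1 ∧ v = Sum.inr e.2) ∨ (v = Sum.inl e.1 ∧ u = Sum.inr e.2)
  · exact subset_convexHull ℝ T (hT z hz hf hadj)
  push Not at hadj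
  obtain ⟨u, v, hu, hv, huv, hE⟩ := hadj
  have key : ∃ d : Fin n₁ ⊕ Fin n₂ → ℝ, (∃ w, d w ≠ 0) ∧ (∀ w, d w ≠ 0 → w = u ∨ w = v) ∧
      bbpPhi E q a b (bbpH E z d) = 0 := by
    set L := (bbpPhi E q a b).comp (bbpH E z) with hL
    by_cases h0 : L (Pi.single u 1) = 0
    · refine ⟨Pi.single u 1, ⟨u, by simp⟩, ?_, h0⟩
      intro w hw
      left; by_contra h; exact hw (by simp [h])
    · refine ⟨L (Pi.single u 1) • Pi.single v 1 - L (Pi.single v 1) • Pi.single u 1,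
        ⟨v, ?_⟩, ?_, ?_⟩
      · simpa [huv.symm] using h0
      · intro w hw
        by_contra! h
        exact hw (by simp [h.1, h.2])
      · change L _ = 0
        rw [map_sub, map_smul, map_smul]; simp only [smul_eq_mul]; ring
  obtain ⟨d, hne, hsupp, hd0⟩ := key
  have hprod : ∀ e ∈ E, d (Sum.inl e.1) * d (Sum.inr e.2) = 0 := by
    intro e he
    by_contra h
    obtain ⟨h1, h2⟩ := mul_ne_zero_iff.1 h
    have := hE e he
    rcases hsupp _ h1 with h1 | h1 <;> rcases hsupp _ h2 with h2 | h2
    · rw [← h1] at h2; cases h2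
    · exact this.1 h1.symm h2.symm
    · exact this.2 h1.symm h2.symm
    · rw [← h1] at h2; cases h2
  have hfr : ∀ w, d w ≠ 0 → z w ≠ 0 ∧ z w ≠ 1 := by
    intro w hw
    rcases hsupp w hw with rfl | rfl
    · exact hu
    · exact hv
  have step : ∀ d' : Fin n₁ ⊕ Fin n₂ → ℝ, (∃ w, d' w ≠ 0) →
      (∀ w, d' w ≠ 0 → z w ≠ 0 ∧ z w ≠ 1) →
      (∀ e ∈ E, d' (Sum.inl e.1) * d' (Sum.inr e.2) = 0) →
      bbpPhi E q a b (bbpH E z d') = 0 →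
      ∃ t : ℝ, 0 < t ∧ bbpG E z + t • bbpH E z d' ∈ convexHull ℝ T := by
    intro d' h1 h2 h3 h4
    obtain ⟨t, ht, hb, hs⟩ := bbp_hit z d' hz h2 h1
    refine ⟨t, ht, ?_⟩
    rw [← bbpG_add E z d' t h3]
    refine ih _ ?_ (z + t • d') rfl hb ?_
    · rw [← hN]; exact Set.ncard_lt_ncard hs (Set.toFinite _)
    · rw [bbpG_add E z d' t h3, map_add, map_smul, h4]; simpa using hf
  obtain ⟨s, hs, hsT⟩ := step d hne hfr hprod hd0
  obtain ⟨t, ht, htT⟩ := step (-d) (by simpa using hne) (fun w hw => hfr w (by simpa using hw))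
    (by simpa using hprod) (by rw [map_neg, map_neg, hd0, neg_zero])
  have hst : s + t ≠ 0 := by positivity
  have := (convex_convexHull ℝ T) hsT htT (a := t / (s + t)) (b := s / (s + t))
    (by positivity) (by positivity) (by field_simp; ring)
  convert this using 1
  rw [map_neg, smul_add, smul_add, smul_neg, smul_neg, smul_smul, smul_smul]
  have e1 : s / (s + t) * t = t / (s + t) * s := by ring
  have e2 : t / (s + t) = 1 - s / (s + t) := by field_simp; ring
  rw [e1, e2]
  module

end


/-- The convex hull of the single-row BBP set `S` equals the convex hull of
the union, over all sets `U` of the three admissible forms (an edge `{i₀,j₀}` of `E`, an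
isolated node of `V₁`, or an isolated node of `V₂`) and all `0/1` assignments `σ` of the
variables outside `U`, of the restricted sets `S_{U,σ}`. -/
theorem convexHull_single_row_BBP_eq_union_of_fixings (n₁ n₂ : ℕ) (hn₁ : 0 < n₁) (hn₂ : 0 < n₂)
    (E : Finset (Fin n₁ × Fin n₂)) (q : Fin n₁ × Fin n₂ → ℝ)
    (a : Fin n₁ → ℝ) (b : Fin n₂ → ℝ) (c : ℝ)
    (S : Set ((Fin n₁ → ℝ) × (Fin n₂ → ℝ) × (↥E → ℝ)))
    (hS : S = {p | (∀ i, p.1 i ∈ Set.Icc (0:ℝ) 1) ∧ (∀ j, p.2.1 j ∈ Set.Icc (0:ℝ) 1) ∧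
        (∀ e : ↥E, p.2.2 e ∈ Set.Icc (0:ℝ) 1) ∧
        (∑ e : ↥E, q e.1 * p.2.2 e) + (∑ i, a i * p.1 i) + (∑ j, b j * p.2.1 j) + c = 0 ∧
        ∀ e : ↥E, p.2.2 e = p.1 (e : Fin n₁ × Fin n₂).1 * p.2.1 (e : Fin n₁ × Fin n₂).2}) :
    convexHull ℝ S =
      convexHull ℝ
        ((⋃ (e : ↥E) (σx : Fin n₁ → ℝ) (σy : Fin n₂ → ℝ)
            (_ : ∀ i, σx i ∈ ({0, 1} : Set ℝ)) (_ : ∀ j, σy j ∈ ({0, 1} : Set ℝ)),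
            {p ∈ S | (∀ i, i ≠ (e : Fin n₁ × Fin n₂).1 → p.1 i = σx i) ∧
              (∀ j, j ≠ (e : Fin n₁ × Fin n₂).2 → p.2.1 j = σy j)}) ∪
         (⋃ (i₀ : Fin n₁) (_ : ∀ j, (i₀, j) ∉ E) (σx : Fin n₁ → ℝ) (σy : Fin n₂ → ℝ)
            (_ : ∀ i, σx i ∈ ({0, 1} : Set ℝ)) (_ : ∀ j, σy j ∈ ({0, 1} : Set ℝ)),
            {p ∈ S | (∀ i, i ≠ i₀ → p.1 i = σx i) ∧ (∀ j, p.2.1 j = σy j)}) ∪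
         (⋃ (j₀ : Fin n₂) (_ : ∀ i, (i, j₀) ∉ E) (σx : Fin n₁ → ℝ) (σy : Fin n₂ → ℝ)
            (_ : ∀ i, σx i ∈ ({0, 1} : Set ℝ)) (_ : ∀ j, σy j ∈ ({0, 1} : Set ℝ)),
            {p ∈ S | (∀ i, p.1 i = σx i) ∧ (∀ j, j ≠ j₀ → p.2.1 j = σy j)})) := by
  classical
  apply subset_antisymm
  · apply convexHull_min _ (convex_convexHull ℝ _)
    intro p hp
    have hp' := hp
    rw [hS] at hp'
    obtain ⟨h1, h2, -, h4, h5⟩ := hp'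
    have hG : p = bbpG E (Sum.elim p.1 p.2.1) :=
      Prod.ext rfl (Prod.ext rfl (funext h5))
    rw [hG]
    refine bbp_hull E q a b c _ ?_ _ (Sum.elim p.1 p.2.1) rfl ?_ ?_
    · clear hG h1 h2 h4 h5 hp p
      intro z hz hf hadj
      have hzS : bbpG E z ∈ S := by
        rw [hS]
        refine ⟨fun i => hz _, fun j => hz _, fun e => ⟨mul_nonneg (hz _).1 (hz _).1,
          mul_le_one₀ (hz _).2 (hz _).1 (hz _).2⟩, hf, fun e => rfl⟩
      let σ : Fin n₁ ⊕ Fin n₂ → ℝ := fun u => if z u = 1 then 1 else 0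
      have hσ : ∀ u, σ u ∈ ({0, 1} : Set ℝ) := by
        intro u; simp only [σ]; split_ifs <;> simp
      have hσz : ∀ u, ¬ (z u ≠ 0 ∧ z u ≠ 1) → z u = σ u := by
        intro u hu
        simp only [σ]; split_ifs with h
        · exact h
        · by_contra h'; exact hu ⟨h', h⟩
      by_cases hedge : ∃ e ∈ E, ∀ u, (z u ≠ 0 ∧ z u ≠ 1) → u = Sum.inl e.1 ∨ u = Sum.inr e.2
      · obtain ⟨e, he, h⟩ := hedge
        refine Or.inl (Or.inl ?_)
        simp only [Set.mem_iUnion]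
        refine ⟨⟨e, he⟩, fun i => σ (Sum.inl i), fun j => σ (Sum.inr j), fun i => hσ _,
          fun j => hσ _, hzS, fun i hi => hσz _ fun h' => ?_, fun j hj => hσz _ fun h' => ?_⟩
        · rcases h _ h' with h | h
          · exact hi (Sum.inl.inj h)
          · cases h
        · rcases h _ h' with h | h
          · cases h
          · exact hj (Sum.inr.inj h)
      have two : ∀ i₀, (∀ u, (z u ≠ 0 ∧ z u ≠ 1) → u = Sum.inl i₀) → ∀ j, (i₀, j) ∉ E :=
        fun i₀ h j hj => hedge ⟨_, hj, fun u hu => Or.inl (h u hu)⟩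
      have three : ∀ j₀, (∀ u, (z u ≠ 0 ∧ z u ≠ 1) → u = Sum.inr j₀) → ∀ i, (i, j₀) ∉ E :=
        fun j₀ h i hi => hedge ⟨_, hi, fun u hu => Or.inr (h u hu)⟩
      have side : ∀ u v, (z u ≠ 0 ∧ z u ≠ 1) → (z v ≠ 0 ∧ z v ≠ 1) → u ≠ v →
          u.isLeft ≠ v.isLeft := by
        intro u v hu hv huv
        obtain ⟨e, -, ⟨h, h'⟩ | ⟨h, h'⟩⟩ := hadj u v hu hv huv
        · rw [h, h']; exact Bool.noConfusion
        · rw [h, h']; exact Bool.noConfusion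
      have uniq : ∀ u v, (z u ≠ 0 ∧ z u ≠ 1) → (z v ≠ 0 ∧ z v ≠ 1) → v = u := by
        intro u v hu hv
        by_contra huv
        obtain ⟨e, he, h⟩ := hadj u v hu hv (Ne.symm huv)
        refine hedge ⟨e, he, fun w hw => ?_⟩
        by_contra hw'
        have hwu : u ≠ w := by
          rintro rfl
          rcases h with h | h
          · exact hw' (Or.inl h.1)
          · exact hw' (Or.inr h.2)
        have hwv : v ≠ w := by
          rintro rfl
          rcases h with h | h
          · exact hw' (Or.inr h.2)
          · exact hw' (Or.inl h.1)
        have a1 := side u v hu hv (Ne.symm huv)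
        have a2 := side u w hu hw hwu
        have a3 := side v w hv hw hwv
        revert a1 a2 a3
        cases u.isLeft <;> cases v.isLeft <;> cases w.isLeft <;> decide
      have main : ∃ u₀, ∀ u, (z u ≠ 0 ∧ z u ≠ 1) → u = u₀ := by
        by_cases hex : ∃ u, z u ≠ 0 ∧ z u ≠ 1
        · obtain ⟨u, hu⟩ := hex
          exact ⟨u, fun v hv => uniq u v hu hv⟩
        · exact ⟨Sum.inl ⟨0, hn₁⟩, fun u hu => (hex ⟨u, hu⟩).elim⟩
      obtain ⟨i₀ | j₀, h⟩ := main
      · refine Or.inl (Or.inr ?_)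
        simp only [Set.mem_iUnion]
        refine ⟨i₀, two i₀ h, fun i => σ (Sum.inl i), fun j => σ (Sum.inr j), fun i => hσ _,
          fun j => hσ _, hzS, fun i hi => hσz _ fun h' => ?_, fun j => hσz _ fun h' => ?_⟩
        · exact hi (Sum.inl.inj (h _ h'))
        · cases h _ h'
      · refine Or.inr ?_
        simp only [Set.mem_iUnion]
        refine ⟨j₀, three j₀ h, fun i => σ (Sum.inl i), fun j => σ (Sum.inr j), fun i => hσ _,
          fun j => hσ _, hzS, fun i => hσz _ fun h' => ?_, fun j hj => hσz _ fun h' => ?_⟩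
        · cases h _ h'
        · exact hj (Sum.inr.inj (h _ h'))
    · rintro (i | j)
      · exact h1 i
      · exact h2 j
    · rw [← hG]; exact h4
  · apply convexHull_mono
    intro p hp
    simp only [Set.mem_union, Set.mem_iUnion] at hp
    rcases hp with (⟨_, _, _, _, _, h⟩ | ⟨_, _, _, _, _, _, h⟩) | ⟨_, _, _, _, _, _, h⟩ <;>
      exact h.1
end

section
/- Let f : [0,1]^n → ℝ be a continuous function and let B ⊆ [0,1]^n be a convex set. Then conv({x ∈ B : f(x) = 0}) = conv({x ∈ B : f(x) ≤ 0}) ∩ conv({x ∈ B : f(x) ≥ 0}). -/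
theorem aux_exists_le {n : ℕ} (l : (Fin n → ℝ) →L[ℝ] ℝ) (t : Set (Fin n → ℝ)) (x : Fin n → ℝ)
    (hx : x ∈ convexHull ℝ t) : ∃ p ∈ t, l p ≤ l x := by
  by_contra! h
  have h2 : convexHull ℝ t ⊆ {y | l x < l y} :=
    convexHull_min h (convex_halfSpace_gt l.toLinearMap.isLinear _)
  exact lt_irrefl (l x) (h2 hx)

theorem aux_zero {n : ℕ} (f : (Fin n → ℝ) → ℝ)
    (B : Set (Fin n → ℝ)) (hf : ContinuousOn f B) (hBconv : Convex ℝ B)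
    (p q : Fin n → ℝ) (hp : p ∈ B) (hq : q ∈ B) (hfp : f p ≤ 0) (hfq : 0 ≤ f q) :
    ∃ z ∈ segment ℝ p q, z ∈ B ∧ f z = 0 := by
  have hs := hBconv.segment_subset hp hq
  have hc : IsPreconnected (segment ℝ p q) := (convex_segment p q).isPreconnected
  obtain ⟨z, hz, h0⟩ := hc.intermediate_value (left_mem_segment ℝ p q)
    (right_mem_segment ℝ p q) (hf.mono hs) ⟨hfp, hfq⟩
  exact ⟨z, hz, hs hz, h0⟩

/-- Let `f : [0,1]^n → ℝ` be continuous and `B ⊆ [0,1]^n` convex. Then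
`conv {x ∈ B : f x = 0} = conv {x ∈ B : f x ≤ 0} ∩ conv {x ∈ B : f x ≥ 0}`. -/
theorem convexHull_eq_level_inter (n : ℕ) (f : (Fin n → ℝ) → ℝ)
    (hf : ContinuousOn f (Set.Icc 0 1))
    (B : Set (Fin n → ℝ)) (hB : B ⊆ Set.Icc 0 1) (hBconv : Convex ℝ B) :
    convexHull ℝ {x ∈ B | f x = 0} =
      convexHull ℝ {x ∈ B | f x ≤ 0} ∩ convexHull ℝ {x ∈ B | 0 ≤ f x} := by
  apply Set.Subset.antisymm
  · exact Set.subset_inter (convexHull_mono fun x hx => ⟨hx.1, hx.2.le⟩)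
      (convexHull_mono fun x hx => ⟨hx.1, hx.2.ge⟩)
  rintro x ⟨hx1, hx2⟩
  rw [convexHull_eq_union_convexHull_finite_subsets] at hx1 hx2
  simp only [Set.mem_iUnion] at hx1 hx2
  obtain ⟨s, hs, hxs⟩ := hx1
  obtain ⟨t, ht, hxt⟩ := hx2
  have H : ∀ a : s × t, ∃ z ∈ segment ℝ (a.1 : Fin n → ℝ) a.2, z ∈ B ∧ f z = 0 := fun a =>
    aux_zero f B (hf.mono hB) hBconv _ _ (hs a.1.2).1 (ht a.2.2).1 (hs a.1.2).2 (ht a.2.2).2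
  choose z hz hz0 using H
  have hsub : Set.range z ⊆ {x ∈ B | f x = 0} := by
    rintro _ ⟨a, rfl⟩
    exact hz0 a
  apply convexHull_mono hsub
  by_contra hx
  obtain ⟨l, u, hl, hu⟩ := geometric_hahn_banach_point_closed (convex_convexHull ℝ (Set.range z))
    ((Set.finite_range z).isClosed_convexHull (𝕜 := ℝ)) hx
  obtain ⟨p, hp, hlp⟩ := aux_exists_le l _ x hxs
  obtain ⟨q, hq, hlq⟩ := aux_exists_le l _ x hxt
  have h1 := hu _ (subset_convexHull ℝ _ ⟨(⟨p, hp⟩, ⟨q, hq⟩), rfl⟩)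
  have h2 := (convex_halfSpace_le l.toLinearMap.isLinear (l x)).segment_subset hlp hlq
    (hz (⟨p, hp⟩, ⟨q, hq⟩))
  have h3 : l (z (⟨p, hp⟩, ⟨q, hq⟩)) ≤ l x := h2
  linarith
end

section
/- Let f : [0,1]^n → ℝ be a convex function. Then the set G := conv({x ∈ [0,1]^n : f(x) ≥ 0}) is a polytope; that is, there exists a finite set F ⊆ ℝ^n such that G = conv(F). -/
open Set Filter Topology in
lemma aux_max (g : ℝ → ℝ) (hg : ConvexOn ℝ (Set.Icc 0 1) g)
    (hne : {t ∈ Set.Icc (0:ℝ) 1 | 0 ≤ g t}.Nonempty) :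
    ∃ m ∈ {t ∈ Set.Icc (0:ℝ) 1 | 0 ≤ g t}, ∀ t ∈ {t ∈ Set.Icc (0:ℝ) 1 | 0 ≤ g t}, t ≤ m := by
  set T := {t ∈ Set.Icc (0:ℝ) 1 | 0 ≤ g t} with hT
  have hb : BddAbove T := ⟨1, fun t ht => ht.1.2⟩
  obtain ⟨t0, ht0⟩ := hne
  refine ⟨sSup T, ?_, fun t ht => le_csSup hb ht⟩
  have h0s : t0 ≤ sSup T := le_csSup hb ht0
  have hs1 : sSup T ≤ 1 := csSup_le ⟨t0, ht0⟩ (fun t ht => ht.1.2)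
  have hsI : sSup T ∈ Set.Icc (0:ℝ) 1 := ⟨ht0.1.1.trans h0s, hs1⟩
  refine ⟨hsI, ?_⟩
  by_contra hneg
  push Not at hneg
  set s := sSup T
  have hlt : t0 < s := lt_of_le_of_ne h0s (by rintro h; rw [← h] at hneg; exact absurd ht0.2 (not_le.2 hneg))
  have hd : 0 < g t0 - g s := by have := ht0.2; linarith
  -- choose t in T close to s
  have hδ : 0 < (s - t0) * (-g s) / (g t0 - g s) := by
    apply div_pos (mul_pos (by linarith) (by linarith)) hd
  obtain ⟨t, ht, hts⟩ := exists_lt_of_lt_csSup (s := T) ⟨t0, ht0⟩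
    (show s - (s - t0) * (-g s) / (g t0 - g s) < s by linarith)
  have htle : t ≤ s := le_csSup hb ht
  have hle : (s - t0) * (-g s) / (g t0 - g s) ≤ s - t0 := by
    rw [div_le_iff₀ hd]
    have := ht0.2
    nlinarith
  have hp : 0 < s - t0 := by linarith
  have hc := hg.2 hsI ht0.1
    (show 0 ≤ (t - t0) / (s - t0) from div_nonneg (by linarith) hp.le)
    (show 0 ≤ (s - t) / (s - t0) from div_nonneg (by linarith) hp.le)
    (by field_simp; ring)
  have e : ((t - t0) / (s - t0)) • s + ((s - t) / (s - t0)) • t0 = t := by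
    simp only [smul_eq_mul]; field_simp; ring
  rw [e] at hc
  have h3 : (t - t0) / (s - t0) * g s + (s - t) / (s - t0) * g t0 < 0 := by
    have : (t - t0) / (s - t0) * g s + (s - t) / (s - t0) * g t0
      = ((s - t) * (g t0 - g s) - (s - t0) * (-g s)) / (s - t0) := by
      field_simp; ring
    rw [this]
    apply div_neg_of_neg_of_pos _ hp
    have : s - t < (s - t0) * (-g s) / (g t0 - g s) := by linarith
    rw [lt_div_iff₀ hd] at this
    linarith
  have := ht.2
  simp only [smul_eq_mul] at hc
  linarith

lemma aux_1d (g : ℝ → ℝ) (hg : ConvexOn ℝ (Set.Icc 0 1) g) :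
    ∃ F : Set ℝ, F.Finite ∧ F ⊆ {t ∈ Set.Icc (0:ℝ) 1 | 0 ≤ g t} ∧
      {t ∈ Set.Icc (0:ℝ) 1 | 0 ≤ g t} ⊆ convexHull ℝ F := by
  rcases Set.eq_empty_or_nonempty {t ∈ Set.Icc (0:ℝ) 1 | 0 ≤ g t} with h | h
  · exact ⟨∅, Set.finite_empty, by simp, by rw [h]; simp⟩
  obtain ⟨M, hM, hM'⟩ := aux_max g hg h
  have hg2 : ConvexOn ℝ (Set.Icc 0 1) (fun t => g (1 - t)) := by
    refine ⟨convex_Icc _ _, fun x hx y hy a b ha hb hab => ?_⟩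
    have := hg.2 (x := 1 - x) (y := 1 - y) ⟨by linarith [hx.2], by linarith [hx.1]⟩
      ⟨by linarith [hy.2], by linarith [hy.1]⟩ ha hb hab
    have e : 1 - (a • x + b • y) = a • (1 - x) + b • (1 - y) := by
      simp only [smul_eq_mul]; linear_combination -hab
    simp only [e]; exact this
  obtain ⟨m, hm, hm'⟩ := aux_max _ hg2 (by
    obtain ⟨t, ht⟩ := h
    exact ⟨1 - t, ⟨by linarith [ht.1.2], by linarith [ht.1.1]⟩, by simpa using ht.2⟩)
  have h1 : 1 - m ∈ {t ∈ Set.Icc (0:ℝ) 1 | 0 ≤ g t} :=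
    ⟨⟨by linarith [hm.1.2], by linarith [hm.1.1]⟩, hm.2⟩
  refine ⟨{1 - m, M}, by simp, ?_, ?_⟩
  · rintro t (rfl | rfl)
    · exact h1
    · exact hM
  · intro t ht
    rw [convexHull_pair, segment_eq_Icc (hM' _ h1)]
    refine ⟨?_, hM' t ht⟩
    have := hm' (1 - t) ⟨⟨by linarith [ht.1.2], by linarith [ht.1.1]⟩, by simpa using ht.2⟩
    linarith

open Classical in
/-- fractional coordinates -/
noncomputable def fracC {n : ℕ} (x : Fin n → ℝ) : Finset (Fin n) :=
  Finset.univ.filter (fun k => x k ≠ 0 ∧ x k ≠ 1)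

lemma mem_fracC {n : ℕ} (x : Fin n → ℝ) (k : Fin n) : k ∈ fracC x ↔ (x k ≠ 0 ∧ x k ≠ 1) := by
  simp [fracC]

open Set Filter Topology in
lemma aux_exit {n : ℕ} (x v : Fin n → ℝ) (hx : x ∈ Set.Icc (0 : Fin n → ℝ) 1)
    (hv : v ≠ 0) (hs : ∀ k, v k ≠ 0 → k ∈ fracC x) :
    ∃ t : ℝ, 0 ≤ t ∧ x + t • v ∈ Set.Icc (0 : Fin n → ℝ) 1 ∧
      (fracC (x + t • v)).card < (fracC x).card := by
  obtain ⟨k, hk⟩ := Function.ne_iff.1 hv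
  simp only [Pi.zero_apply] at hk
  have hcl : IsClosed {t : ℝ | 0 ≤ t ∧ x + t • v ∈ Set.Icc (0 : Fin n → ℝ) 1} :=
    (isClosed_Ici (a := (0:ℝ))).inter (isClosed_Icc.preimage (by fun_prop : Continuous fun t : ℝ => x + t • v))
  have hkp : 0 < |v k| := abs_pos.2 hk
  have hbd : ∀ t ∈ {t : ℝ | 0 ≤ t ∧ x + t • v ∈ Set.Icc (0 : Fin n → ℝ) 1}, t ≤ 1 / |v k| := by
    rintro t ⟨h0, h1, h2⟩
    have a1 := h1 k
    have a2 := h2 k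
    have a3 := hx.1 k
    have a4 := hx.2 k
    simp only [Pi.add_apply, Pi.smul_apply, smul_eq_mul, Pi.zero_apply, Pi.one_apply] at a1 a2 a3 a4
    rw [le_div_iff₀ hkp, ← abs_of_nonneg h0, ← abs_mul, abs_le]
    constructor <;> linarith
  have hcomp : IsCompact {t : ℝ | 0 ≤ t ∧ x + t • v ∈ Set.Icc (0 : Fin n → ℝ) 1} :=
    (isCompact_Icc (a := (0:ℝ)) (b := 1 / |v k|)).of_isClosed_subset hcl
      (fun t ht => ⟨ht.1, hbd t ht⟩)
  obtain ⟨t, ht, htm⟩ := hcomp.exists_isGreatest ⟨0, le_rfl, by simpa using hx⟩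
  refine ⟨t, ht.1, ht.2, ?_⟩
  apply Finset.card_lt_card
  have hsub : fracC (x + t • v) ⊆ fracC x := by
    intro j hj
    by_cases h : v j = 0
    · rw [mem_fracC] at hj ⊢
      simpa [h] using hj
    · exact hs j h
  refine hsub.ssubset_of_ne (fun heq => ?_)
  have hev : ∀ᶠ s in 𝓝 t, ∀ j, (x + s • v) j ∈ Set.Icc (0:ℝ) 1 := by
    rw [eventually_all]
    intro j
    have b1 := ht.2.1 j
    have b2 := ht.2.2 j
    by_cases h : v j = 0
    · refine Eventually.of_forall fun s => ?_
      simp [h] at b1 b2 ⊢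
      exact ⟨b1, b2⟩
    · have hj := hs j h
      rw [← heq, mem_fracC] at hj
      have hc : Continuous fun s : ℝ => (x + s • v) j := by
        simp only [Pi.add_apply, Pi.smul_apply]; fun_prop
      have : (x + t • v) j ∈ Set.Ioo (0:ℝ) 1 :=
        ⟨lt_of_le_of_ne b1 (Ne.symm hj.1), lt_of_le_of_ne b2 hj.2⟩
      exact (hc.continuousAt.eventually (isOpen_Ioo.mem_nhds this)).mono
        (fun s hs => Ioo_subset_Icc_self hs)
  obtain ⟨ε, hε, hball⟩ := Metric.eventually_nhds_iff.1 hev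
  have := @hball (t + ε / 2) (by simp [abs_of_pos hε]; linarith)
  have h2 := htm (a := t + ε / 2) ⟨by linarith [ht.1], fun j => (this j).1, fun j => (this j).2⟩
  linarith

open Set Filter Topology in
lemma aux_dir {n : ℕ} (f : (Fin n → ℝ) → ℝ) (hf : ConvexOn ℝ (Set.Icc 0 1) f)
    (x : Fin n → ℝ) (hx : x ∈ Set.Icc (0 : Fin n → ℝ) 1) (hfx : 0 ≤ f x) (i j : Fin n) (hij : i ≠ j)
    (hi : i ∈ fracC x) (hj : j ∈ fracC x) :
    ∃ v : Fin n → ℝ, v ≠ 0 ∧ (∀ k, v k ≠ 0 → k ∈ fracC x) ∧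
      ∀ t : ℝ, x + t • v ∈ Set.Icc (0 : Fin n → ℝ) 1 → 0 ≤ f (x + t • v) := by
  have hI : ∀ k ∈ fracC x, 0 < x k ∧ x k < 1 := by
    intro k hk
    rw [mem_fracC] at hk
    exact ⟨lt_of_le_of_ne (hx.1 k) (Ne.symm hk.1), lt_of_le_of_ne (hx.2 k) hk.2⟩
  let L : ℝ × ℝ →ₗ[ℝ] (Fin n → ℝ) :=
    (LinearMap.single ℝ (fun _ => ℝ) i).comp (LinearMap.fst ℝ ℝ ℝ) +
    (LinearMap.single ℝ (fun _ => ℝ) j).comp (LinearMap.snd ℝ ℝ ℝ)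
  have Li : ∀ p, L p i = p.1 := by intro p; simp [L, hij]
  have Lj : ∀ p, L p j = p.2 := by intro p; simp [L, hij.symm]
  have Lk : ∀ p k, k ≠ i → k ≠ j → L p k = 0 := by intro p k h1 h2; simp [L, h1, h2]
  let U : Set (ℝ × ℝ) := Ioo (-x i) (1 - x i) ×ˢ Ioo (-x j) (1 - x j)
  have hUo : IsOpen U := isOpen_Ioo.prod isOpen_Ioo
  have hUc : Convex ℝ U := (convex_Ioo _ _).prod (convex_Ioo _ _)
  have hUm : ∀ p ∈ U, x + L p ∈ Set.Icc (0 : Fin n → ℝ) 1 := by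
    rintro p ⟨⟨h1, h2⟩, h3, h4⟩
    have : ∀ k, (x + L p) k ∈ Set.Icc (0:ℝ) 1 := by
      intro k
      rw [Pi.add_apply]
      by_cases h : k = i
      · subst h; rw [Li]; constructor <;> linarith
      by_cases h' : k = j
      · subst h'; rw [Lj]; constructor <;> linarith
      rw [Lk p k h h', add_zero]; exact ⟨hx.1 k, hx.2 k⟩
    exact ⟨fun k => (this k).1, fun k => (this k).2⟩
  have hφ : ConvexOn ℝ U (fun p => f (x + L p)) := by
    refine ⟨hUc, fun p hp q hq a b ha hb hab => ?_⟩
    have := hf.2 (hUm p hp) (hUm q hq) ha hb hab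
    have e : x + L (a • p + b • q) = a • (x + L p) + b • (x + L q) := by
      rw [map_add, map_smul, map_smul, smul_add, smul_add]
      nth_rewrite 1 [← one_smul ℝ x]
      rw [← hab, add_smul]; abel
    simp only [e]; exact this
  have hcont : ContinuousOn (fun p => f (x + L p)) U := hφ.continuousOn hUo
  have hCo : IsOpen {p ∈ U | f (x + L p) < 0} := hcont.isOpen_inter_preimage hUo isOpen_Iio
  have hCc : Convex ℝ {p ∈ U | f (x + L p) < 0} := hφ.convex_lt 0
  obtain ⟨g, hg⟩ := geometric_hahn_banach_open_point (x := (0 : ℝ × ℝ)) hCc hCo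
    (by rintro ⟨_, h⟩; simp at h; linarith)
  obtain ⟨d, hd0, hgd⟩ : ∃ d : ℝ × ℝ, d ≠ 0 ∧ g d = 0 := by
    by_cases h : g (1, 0) = 0
    · exact ⟨(1, 0), by simp, h⟩
    · refine ⟨(g (0, 1), - g (1, 0)), by simp [h], ?_⟩
      have : ((g (0, 1), - g (1, 0)) : ℝ × ℝ) = g (0,1) • ((1, 0) : ℝ × ℝ) + (- g (1,0)) • ((0, 1) : ℝ × ℝ) := by
        simp
      rw [this, map_add, map_smul, map_smul, smul_eq_mul, smul_eq_mul]; ring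
  refine ⟨L d, ?_, ?_, ?_⟩
  · intro h
    apply hd0
    ext
    · rw [← Li, h]; rfl
    · rw [← Lj, h]; rfl
  · intro k hk
    by_cases h : k = i
    · rwa [h]
    by_cases h' : k = j
    · rwa [h']
    exact absurd (Lk d k h h') hk
  · intro t ht
    by_contra hneg
    push Not at hneg
    -- s : small weight on x
    obtain ⟨s, hs0, hs1, hs⟩ : ∃ s : ℝ, 0 < s ∧ s < 1 ∧ (1 - s) * f (x + t • L d) + s * f x < 0 := by
      have hc : Tendsto (fun s : ℝ => (1 - s) * f (x + t • L d) + s * f x) (𝓝[>] 0)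
          (𝓝 ((1 - 0) * f (x + t • L d) + 0 * f x)) :=
        tendsto_nhdsWithin_of_tendsto_nhds (Continuous.tendsto (by fun_prop) 0)
      have h1 := hc.eventually (gt_mem_nhds (show (1 - 0) * f (x + t • L d) + 0 * f x < 0 by linarith))
      have h2 : ∀ᶠ s : ℝ in 𝓝[>] 0, s ∈ Ioo (0:ℝ) 1 := Ioo_mem_nhdsGT one_pos
      obtain ⟨s, a, b⟩ := (h1.and h2).exists
      exact ⟨s, b.1, b.2, a⟩
    have hc := hf.2 ht hx (show 0 ≤ 1 - s by linarith) hs0.le (by ring)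
    have e : (1 - s) • (x + t • L d) + s • x = x + L (((1 - s) * t) • d) := by
      rw [map_smul]; module
    rw [e] at hc
    simp only [smul_eq_mul] at hc
    have hlt : f (x + L (((1 - s) * t) • d)) < 0 := by linarith
    have hU : ((1 - s) * t) • d ∈ U := by
      have c1 := ht.1 i
      have c2 := ht.2 i
      have c3 := ht.1 j
      have c4 := ht.2 j
      simp only [Pi.add_apply, Pi.smul_apply, smul_eq_mul, Pi.zero_apply, Pi.one_apply, Li, Lj] at c1 c2 c3 c4
      obtain ⟨d1, d2⟩ := hI i hi
      obtain ⟨d3, d4⟩ := hI j hj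
      refine ⟨⟨?_, ?_⟩, ?_, ?_⟩ <;> simp only [Prod.smul_fst, Prod.smul_snd, smul_eq_mul] <;> nlinarith
    have := hg _ ⟨hU, hlt⟩
    rw [map_smul, hgd] at this
    simp at this

lemma aux_edge {n : ℕ} (f : (Fin n → ℝ) → ℝ) (hf : ConvexOn ℝ (Set.Icc 0 1) f)
    (i : Fin n) (c : Fin n → Bool) :
    ∃ F : Set (Fin n → ℝ), F.Finite ∧ F ⊆ {x ∈ Set.Icc (0 : Fin n → ℝ) 1 | 0 ≤ f x} ∧
      ∀ x ∈ {x ∈ Set.Icc (0 : Fin n → ℝ) 1 | 0 ≤ f x},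
        (∀ k, k ≠ i → x k = if c k then 1 else 0) → x ∈ convexHull ℝ F := by
  let c' : Fin n → ℝ := fun k => if c k then 1 else 0
  let A : ℝ →ᵃ[ℝ] (Fin n → ℝ) := AffineMap.lineMap (Function.update c' i 0) (Function.update c' i 1)
  have hA : ∀ t, A t = Function.update c' i t := by
    intro t
    ext k
    by_cases h : k = i
    · subst h; simp [A, AffineMap.lineMap_apply]
    · simp [A, AffineMap.lineMap_apply, h]
  have hm : ∀ t, A t ∈ Set.Icc (0 : Fin n → ℝ) 1 ↔ t ∈ Set.Icc (0:ℝ) 1 := by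
    intro t
    rw [hA]
    constructor
    · rintro ⟨h1, h2⟩
      have := h1 i
      have := h2 i
      simp_all
    · rintro ⟨h1, h2⟩
      have : ∀ k, Function.update c' i t k ∈ Set.Icc (0:ℝ) 1 := by
        intro k
        by_cases h : k = i
        · subst h; simp [h1, h2]
        · simp only [Function.update_of_ne h, c']; split_ifs <;> simp
      exact ⟨fun k => (this k).1, fun k => (this k).2⟩
  have hg : ConvexOn ℝ (Set.Icc 0 1) (f ∘ A) :=
    (hf.comp_affineMap A).subset (fun t ht => (hm t).2 ht) (convex_Icc _ _)
  obtain ⟨F, hF, hF1, hF2⟩ := aux_1d _ hg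
  refine ⟨A '' F, hF.image _, ?_, ?_⟩
  · rintro _ ⟨t, ht, rfl⟩
    exact ⟨(hm t).2 (hF1 ht).1, (hF1 ht).2⟩
  · intro x hx hk
    have e : A (x i) = x := by
      rw [hA]
      ext k
      by_cases h : k = i
      · subst h; simp
      · simp [h, c', hk k h]
    rw [← AffineMap.image_convexHull]
    refine ⟨x i, hF2 ⟨(hm _).1 (by rw [e]; exact hx.1), ?_⟩, e⟩
    rw [Function.comp_apply, e]; exact hx.2

/-- Let `f : [0,1]^n → ℝ` be convex. Then
`G := conv {x ∈ [0,1]^n : f x ≥ 0}` is a polytope. -/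
theorem convexHull_superlevel_of_convex_is_polytope (n : ℕ) (f : (Fin n → ℝ) → ℝ)
    (hf : ConvexOn ℝ (Set.Icc 0 1) f) :
    ∃ F : Finset (Fin n → ℝ),
      convexHull ℝ {x ∈ Set.Icc (0 : Fin n → ℝ) 1 | 0 ≤ f x} = convexHull ℝ (↑F : Set (Fin n → ℝ)) := by
  choose E hE1 hE2 hE3 using aux_edge f hf
  let V : Set (Fin n → ℝ) := {x ∈ Set.Icc (0 : Fin n → ℝ) 1 | 0 ≤ f x} ∩
    Set.range (fun (c : Fin n → Bool) k => if c k then (1:ℝ) else 0)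
  have hfin : (V ∪ ⋃ i, ⋃ c, E i c).Finite :=
    ((Set.finite_range _).inter_of_right _).union
      (Set.finite_iUnion fun i => Set.finite_iUnion fun c => hE1 i c)
  refine ⟨hfin.toFinset, ?_⟩
  rw [Set.Finite.coe_toFinset]
  apply subset_antisymm
  swap
  · apply convexHull_mono
    apply Set.union_subset Set.inter_subset_left
    exact Set.iUnion_subset fun i => Set.iUnion_subset fun c => hE2 i c
  apply convexHull_min _ (convex_convexHull _ _)
  have key : ∀ m : ℕ, ∀ x ∈ {x ∈ Set.Icc (0 : Fin n → ℝ) 1 | 0 ≤ f x}, (fracC x).card = m →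
      x ∈ convexHull ℝ (V ∪ ⋃ i, ⋃ c, E i c) := by
    intro m
    induction m using Nat.strong_induction_on with
    | _ m ih =>
    intro x hx hm
    have hbool : ∀ k, k ∉ fracC x → x k = if (decide (x k = 1)) then 1 else 0 := by
      intro k hk
      rw [mem_fracC] at hk
      by_cases h : x k = 1
      · simp [h]
      · simp only [h, decide_false]
        by_contra h'
        exact hk ⟨by simpa using h', h⟩
    by_cases h2 : 1 < (fracC x).card
    · obtain ⟨i, hi, j, hj, hij⟩ := Finset.one_lt_card.1 h2
      obtain ⟨v, hv0, hvs, hv⟩ := aux_dir f hf x hx.1 hx.2 i j hij hi hj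
      obtain ⟨t, ht0, ht1, ht2⟩ := aux_exit x v hx.1 hv0 hvs
      obtain ⟨s, hs0, hs1, hs2⟩ := aux_exit x (-v) hx.1 (neg_ne_zero.2 hv0)
        (fun k hk => hvs k (by simpa using hk))
      have e : x + s • (-v) = x + (-s) • v := by simp
      rw [e] at hs1 hs2
      have m1 := ih _ (hm ▸ ht2) _ ⟨ht1, hv _ ht1⟩ rfl
      have m2 := ih _ (hm ▸ hs2) _ ⟨hs1, hv _ hs1⟩ rfl
      have htp : 0 < t := by
        refine lt_of_le_of_ne ht0 ?_
        rintro rfl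
        simp at ht2
      have hne : s + t ≠ 0 := by linarith
      have := (convex_convexHull ℝ (V ∪ ⋃ i, ⋃ c, E i c)) m1 m2 (a := s / (s + t)) (b := t / (s + t))
        (by positivity) (by positivity) (by field_simp)
      convert this using 1
      ext k
      simp only [Pi.add_apply, Pi.smul_apply, smul_eq_mul]
      field_simp
      ring
    · by_cases h1 : (fracC x).card = 1
      · obtain ⟨i, hi⟩ := Finset.card_eq_one.1 h1
        have := hE3 i (fun k => decide (x k = 1)) x hx
          (fun k hk => hbool k (by rw [hi]; simpa using hk))
        refine convexHull_mono ?_ this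
        exact Set.subset_union_of_subset_right
          (Set.subset_iUnion_of_subset i (Set.subset_iUnion (E i) _)) _
      · have h0 : fracC x = ∅ := Finset.card_eq_zero.1 (by omega)
        apply subset_convexHull
        left
        refine ⟨hx, fun k => decide (x k = 1), ?_⟩
        ext k
        exact (hbool k (by simp [h0])).symm
  exact fun x hx => key _ x hx rfl
end

section
/- Let r, s ∈ ℝ and τ > 0, and define S₀^> = {(x,y) ∈ [0,1]² : x − r ≥ 0, y − s ≥ 0, (x − r)(y − s) = τ}. Then conv(S₀^>) = {(x,y) ∈ [0,1]² : x − r ≥ 0, y − s ≥ 0, (x − r)(y − s) ≥ τ} ∩ conv({(x,y) ∈ [0,1]² : x − r ≥ 0, y − s ≥ 0, (x − r)(y − s) ≤ τ}). -/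
lemma aux_vert {C : Set (ℝ × ℝ)} (hC : Convex ℝ C) {x y1 y2 y : ℝ} (h1 : (x, y1) ∈ C)
    (h2 : (x, y2) ∈ C) (a : y1 ≤ y) (b : y ≤ y2) : (x, y) ∈ C := by
  rcases eq_or_lt_of_le (a.trans b) with h | h
  · have : y = y1 := by linarith
    rwa [this]
  · have hd : 0 < y2 - y1 := by linarith
    have := hC h1 h2 (a := (y2 - y) / (y2 - y1)) (b := (y - y1) / (y2 - y1))
      (div_nonneg (by linarith) hd.le) (div_nonneg (by linarith) hd.le)
      (by field_simp; ring)
    convert this using 1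
    ext
    · simp; field_simp; ring
    · simp; field_simp; ring

lemma aux_alpha (a d τ u v : ℝ) (hτ : 0 < τ) (hu0 : 0 ≤ u) (hu : a ≤ u) (hv0 : 0 ≤ v) (hv : v ≤ d)
    (huv : τ ≤ u * v) :
    ∃ α : ℝ, 0 < α ∧ a ≤ α ∧ τ ≤ α * d ∧ α ≤ u ∧ (α = a ∨ α * d = τ) := by
  have hvp : 0 < v := by
    rcases eq_or_lt_of_le hv0 with h | h
    · rw [← h] at huv; linarith
    · exact h
  have hd : 0 < d := by linarith
  have e : τ / d * d = τ := by field_simp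
  refine ⟨max a (τ / d), lt_max_of_lt_right (by positivity), le_max_left _ _, ?_, ?_, ?_⟩
  · have := mul_le_mul_of_nonneg_right (le_max_right a (τ / d)) hd.le
    linarith
  · refine max_le hu ?_
    rw [div_le_iff₀ hd]
    nlinarith
  · rcases max_choice a (τ / d) with h | h
    · left; exact h
    · right; rw [h]; exact e


/-- For `r, s ∈ ℝ`, `τ > 0` and
`S₀^> = {(x,y) ∈ [0,1]² : x − r ≥ 0, y − s ≥ 0, (x − r)(y − s) = τ}`,
`conv S₀^>` equals the intersection of the set where `(x−r)(y−s) ≥ τ` with the convex hull of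
the set where `(x−r)(y−s) ≤ τ`. -/
theorem convexHull_hyperbola_branch (r s τ : ℝ) (hτ : 0 < τ) :
    convexHull ℝ {p : ℝ × ℝ | p.1 ∈ Set.Icc (0:ℝ) 1 ∧ p.2 ∈ Set.Icc (0:ℝ) 1 ∧
        0 ≤ p.1 - r ∧ 0 ≤ p.2 - s ∧ (p.1 - r) * (p.2 - s) = τ} =
      {p : ℝ × ℝ | p.1 ∈ Set.Icc (0:ℝ) 1 ∧ p.2 ∈ Set.Icc (0:ℝ) 1 ∧
        0 ≤ p.1 - r ∧ 0 ≤ p.2 - s ∧ τ ≤ (p.1 - r) * (p.2 - s)} ∩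
      convexHull ℝ {p : ℝ × ℝ | p.1 ∈ Set.Icc (0:ℝ) 1 ∧ p.2 ∈ Set.Icc (0:ℝ) 1 ∧
        0 ≤ p.1 - r ∧ 0 ≤ p.2 - s ∧ (p.1 - r) * (p.2 - s) ≤ τ} := by
  apply Set.Subset.antisymm
  · apply Set.subset_inter
    · apply convexHull_min
      · rintro p ⟨h1, h2, h3, h4, h5⟩
        exact ⟨h1, h2, h3, h4, h5.ge⟩
      · rintro ⟨x, y⟩ ⟨⟨h1, h1'⟩, ⟨h2, h2'⟩, h3, h4, h5⟩ ⟨x', y'⟩ ⟨⟨g1, g1'⟩, ⟨g2, g2'⟩, g3, g4, g5⟩ a b ha hb hab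
        obtain rfl : b = 1 - a := by linarith
        simp only [Set.mem_setOf_eq, Prod.fst_add, Prod.snd_add, Prod.smul_fst, Prod.smul_snd,
          smul_eq_mul, Set.mem_Icc] at *
        refine ⟨⟨by positivity, by nlinarith⟩, ⟨by positivity, by nlinarith⟩, by nlinarith, by nlinarith, ?_⟩
        obtain ⟨u, rfl⟩ : ∃ u, x = r + u := ⟨x - r, by ring⟩
        obtain ⟨v, rfl⟩ : ∃ u, y = s + u := ⟨y - s, by ring⟩
        obtain ⟨u', rfl⟩ : ∃ u, x' = r + u := ⟨x' - r, by ring⟩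
        obtain ⟨v', rfl⟩ : ∃ u, y' = s + u := ⟨y' - s, by ring⟩
        simp only [add_sub_cancel_left] at *
        have key : 2 * τ ≤ u * v' + u' * v := by
          have hp : τ * τ ≤ (u * v') * (u' * v) := by
            have := mul_le_mul h5 g5 hτ.le (by positivity)
            linarith
          have h0 : 0 ≤ u * v' + u' * v := by positivity
          nlinarith [sq_nonneg (u * v' - u' * v)]
        have e : (a * (r + u) + (1 - a) * (r + u') - r) * (a * (s + v) + (1 - a) * (s + v') - s)
          = a * a * (u * v) + (1 - a) * (1 - a) * (u' * v') + a * (1 - a) * (u * v' + u' * v) := by ring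
        rw [e]
        have k1 := mul_le_mul_of_nonneg_left h5 (mul_nonneg ha ha)
        have k2 := mul_le_mul_of_nonneg_left g5 (mul_nonneg hb hb)
        have k3 := mul_le_mul_of_nonneg_left key (mul_nonneg ha hb)
        nlinarith
    · apply convexHull_mono
      rintro p ⟨h1, h2, h3, h4, h5⟩
      exact ⟨h1, h2, h3, h4, h5.le⟩
  · rintro ⟨x, y⟩ ⟨⟨⟨h1, h1'⟩, ⟨h2, h2'⟩, h3, h4, h5⟩, hL⟩
    simp only at h1 h1' h2 h2' h3 h4 h5
    obtain ⟨α, hα, hαa, hαd, hαu, hαc⟩ := aux_alpha (max 0 (-r)) (1 - s) τ (x - r) (y - s) hτ h3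
      (max_le h3 (by linarith)) h4 (by linarith) h5
    obtain ⟨β, hβ, hβa, hβd, hβu, hβc⟩ := aux_alpha (max 0 (-s)) (1 - r) τ (y - s) (x - r) hτ h4
      (max_le h4 (by linarith)) h3 (by linarith) (by linarith)
    have hαr := (le_max_right 0 (-r)).trans hαa
    have hβs := (le_max_right 0 (-s)).trans hβa
    -- the hull lies below the chord
    have hline : ∀ p ∈ convexHull ℝ {p : ℝ × ℝ | p.1 ∈ Set.Icc (0:ℝ) 1 ∧ p.2 ∈ Set.Icc (0:ℝ) 1 ∧
        0 ≤ p.1 - r ∧ 0 ≤ p.2 - s ∧ (p.1 - r) * (p.2 - s) ≤ τ},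
        β * (p.1 - r) + α * (p.2 - s) ≤ α * β + τ := by
      intro p hp
      refine convexHull_min (t := {p : ℝ × ℝ | β * (p.1 - r) + α * (p.2 - s) ≤ α * β + τ}) ?_ ?_ hp
      · rintro ⟨x, y⟩ ⟨⟨k1, k1'⟩, ⟨k2, k2'⟩, k3, k4, k5⟩
        simp only [Set.mem_setOf_eq] at *
        have ka : max 0 (-r) ≤ x - r := max_le k3 (by linarith)
        have kb : max 0 (-s) ≤ y - s := max_le k4 (by linarith)
        by_cases c1 : α ≤ x - r
        · by_cases c2 : β ≤ y - s
          · nlinarith [mul_nonneg (sub_nonneg.2 c1) (sub_nonneg.2 c2)]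
          · push Not at c2
            have : β * (1 - r) = τ := by
              rcases hβc with h | h
              · linarith
              · exact h
            nlinarith
        · push Not at c1
          have : α * (1 - s) = τ := by
            rcases hαc with h | h
            · linarith
            · exact h
          nlinarith
      · rintro ⟨x, y⟩ k ⟨x', y'⟩ k' a b ha hb hab
        obtain rfl : b = 1 - a := by linarith
        simp only [Set.mem_setOf_eq, Prod.fst_add, Prod.snd_add, Prod.smul_fst, Prod.smul_snd,
          smul_eq_mul] at *
        nlinarith [mul_le_mul_of_nonneg_left k ha, mul_le_mul_of_nonneg_left k' hb]
    have hab : α * β ≤ τ := by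
      obtain ⟨⟨z, w⟩, ⟨k1, k1'⟩, ⟨k2, k2'⟩, k3, k4, k5⟩ := convexHull_nonempty_iff.1 ⟨_, hL⟩
      simp only at k1 k1' k2 k2' k3 k4 k5
      have ka : max 0 (-r) ≤ z - r := max_le k3 (by linarith)
      have kb : max 0 (-s) ≤ w - s := max_le k4 (by linarith)
      rcases hαc with h | h
      · rcases hβc with h' | h'
        · rw [← h] at ka
          rw [← h'] at kb
          exact (mul_le_mul ka kb hβ.le k3).trans k5
        · nlinarith
      · nlinarith
    have hl := hline _ hL
    simp only at hl
    clear hline hL hαc hβc hαa hβa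
    have hu : 0 < x - r := by linarith
    have hC := convex_convexHull ℝ {p : ℝ × ℝ | p.1 ∈ Set.Icc (0:ℝ) 1 ∧ p.2 ∈ Set.Icc (0:ℝ) 1 ∧
        0 ≤ p.1 - r ∧ 0 ≤ p.2 - s ∧ (p.1 - r) * (p.2 - s) = τ}
    have hub : β * (x - r) ≤ τ := by nlinarith
    have hsub := subset_convexHull ℝ {p : ℝ × ℝ | p.1 ∈ Set.Icc (0:ℝ) 1 ∧ p.2 ∈ Set.Icc (0:ℝ) 1 ∧
        0 ≤ p.1 - r ∧ 0 ≤ p.2 - s ∧ (p.1 - r) * (p.2 - s) = τ}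
    -- points of the curve
    have hcurve : ∀ u : ℝ, α ≤ u → β * u ≤ τ → (r + u, s + τ / u) ∈ {p : ℝ × ℝ | p.1 ∈ Set.Icc (0:ℝ) 1 ∧ p.2 ∈ Set.Icc (0:ℝ) 1 ∧
        0 ≤ p.1 - r ∧ 0 ≤ p.2 - s ∧ (p.1 - r) * (p.2 - s) = τ} := by
      intro u k1 k2
      have hu : 0 < u := by linarith
      have q1 : β ≤ τ / u := (le_div_iff₀ hu).2 k2
      have q2 : τ / u ≤ 1 - s := (div_le_iff₀ hu).2 (by nlinarith)
      have q3 : u ≤ 1 - r := by nlinarith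
      refine ⟨⟨?_, ?_⟩, ⟨?_, ?_⟩, ?_, ?_, ?_⟩ <;> simp only <;> try linarith
      simp only [add_sub_cancel_left]
      field_simp
    have hbot := hsub (hcurve (x - r) hαu hub)
    rw [add_sub_cancel] at hbot
    rcases eq_or_lt_of_le hab with h | h
    · have e : x - r = α := by
        by_contra hne
        have : α < x - r := lt_of_le_of_ne hαu (Ne.symm hne)
        nlinarith
      have e2 : τ / (x - r) = y - s := by
        rw [e, div_eq_iff hα.ne']
        nlinarith
      rw [e2, add_sub_cancel] at hbot
      exact hbot
    · have hP := hsub (hcurve α le_rfl (by linarith))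
      have hQ := hsub (hcurve (τ / β) ((le_div_iff₀ hβ).2 hab) (by field_simp; exact le_rfl))
      have hd : 0 < τ - α * β := by linarith
      have htop := hC hP hQ (a := (τ - β * (x - r)) / (τ - α * β))
        (b := β * (x - r - α) / (τ - α * β)) (div_nonneg (by linarith) hd.le)
        (div_nonneg (mul_nonneg hβ.le (by linarith)) hd.le)
        (by rw [← add_div, div_eq_one_iff_eq hd.ne']; ring)
      have hτ' := hτ.ne'
      have hd' := hd.ne'
      have hd2 : τ - β * α ≠ 0 := by rwa [mul_comm β α]
      have htop2 : (x, s + (α * β + τ - β * (x - r)) / α) ∈ convexHull ℝ {p : ℝ × ℝ | p.1 ∈ Set.Icc (0:ℝ) 1 ∧ p.2 ∈ Set.Icc (0:ℝ) 1 ∧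
        0 ≤ p.1 - r ∧ 0 ≤ p.2 - s ∧ (p.1 - r) * (p.2 - s) = τ} := by
        convert htop using 1
        ext
        · simp only [Prod.fst_add, Prod.smul_fst, smul_eq_mul]
          field_simp
          ring
        · simp only [Prod.snd_add, Prod.smul_snd, smul_eq_mul]
          field_simp
          ring
      refine aux_vert hC hbot htop2 ?_ ?_
      · have : τ / (x - r) ≤ y - s := (div_le_iff₀ hu).2 (by linarith)
        linarith
      · have : y - s ≤ (α * β + τ - β * (x - r)) / α := (le_div_iff₀ hα).2 (by linarith)
        linarith
end

section
/- Let r, s ∈ ℝ and τ > 0. Then conv({(x,y) ∈ [0,1]² : x − r ≥ 0, y − s ≥ 0, (x − r)(y − s) ≤ τ}) is a polytope; that is, there exists a finite set F ⊆ ℝ² such that this convex hull equals conv(F). -/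
theorem isCompact_convexHull_aux {S : Set (ℝ × ℝ)} (hc : IsCompact S) :
    IsCompact (convexHull ℝ S) := by
  rcases S.eq_empty_or_nonempty with rfl | ⟨p0, hp0⟩
  · simp
  have hK : IsCompact ((stdSimplex ℝ (Fin 3)) ×ˢ (Set.univ.pi (fun _ : Fin 3 => S))) :=
    (isCompact_stdSimplex ℝ (Fin 3)).prod (isCompact_univ_pi (fun _ => hc))
  have hf : Continuous (fun q : (Fin 3 → ℝ) × (Fin 3 → ℝ × ℝ) => ∑ i, q.1 i • q.2 i) := by
    fun_prop
  convert hK.image hf using 1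
  apply Set.Subset.antisymm
  · intro x hx
    obtain ⟨ι, _, z, w, hz, hai, hw, hw1, hwz⟩ := eq_pos_convex_span_of_mem_convexHull hx
    have hcard : Fintype.card ι ≤ 3 := by
      have h1 := hai.card_le_finrank_succ
      have h2 := Submodule.finrank_le (vectorSpan ℝ (Set.range z))
      have h3 : Module.finrank ℝ (ℝ × ℝ) = 2 := by simp
      omega
    obtain ⟨e⟩ : Nonempty (ι ↪ Fin 3) := Function.Embedding.nonempty_of_card_le (by simpa using hcard)
    have hex : ∀ i ∉ Set.range e, Function.extend e w 0 i = 0 := by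
      intro i hi
      rw [Function.extend_apply' _ _ _ (by simpa using hi)]; rfl
    refine ⟨(Function.extend e w 0, Function.extend e z (fun _ => p0)), ⟨⟨?_, ?_⟩, ?_⟩, ?_⟩
    · intro i
      by_cases hi : i ∈ Set.range e
      · obtain ⟨j, rfl⟩ := hi
        simpa [e.injective.extend_apply] using (hw j).le
      · exact (hex i hi).ge
    · rw [← hw1]
      exact (Fintype.sum_of_injective e e.injective _ _ hex
        (fun i => (e.injective.extend_apply _ _ _).symm)).symm
    · intro i _
      by_cases hi : i ∈ Set.range e
      · obtain ⟨j, rfl⟩ := hi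
        simpa [e.injective.extend_apply] using hz ⟨j, rfl⟩
      · dsimp only
        rw [Function.extend_apply' _ _ _ (by simpa using hi)]; exact hp0
    · rw [← hwz]
      refine (Fintype.sum_of_injective e e.injective _ _ ?_ ?_).symm
      · intro i hi
        simp only [hex i hi, zero_smul]
      · intro i
        simp only [e.injective.extend_apply]
  · rintro _ ⟨⟨w, z⟩, ⟨⟨h0, h1⟩, hz⟩, rfl⟩
    exact (convex_convexHull ℝ S).sum_mem (fun i _ => h0 i) h1
      (fun i _ => subset_convexHull ℝ S (hz i trivial))

theorem exists_small_aux (f : List ℝ) (hf : ∀ x ∈ f, 0 < x) : ∃ e : ℝ, 0 < e ∧ ∀ x ∈ f, e ≤ x := by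
  induction f with
  | nil => exact ⟨1, one_pos, by simp⟩
  | cons a l ih =>
    obtain ⟨e, he, h⟩ := ih (fun x hx => hf x (by simp [hx]))
    refine ⟨min e a, lt_min he (hf a (by simp)), ?_⟩
    intro x hx
    rcases List.mem_cons.1 hx with rfl | hx
    · exact min_le_right _ _
    · exact (min_le_left _ _).trans (h x hx)

theorem extreme_aux {S : Set (ℝ × ℝ)} {x y : ℝ}
    (h : (x, y) ∈ (convexHull ℝ S).extremePoints ℝ) (q w : ℝ)
    (h1 : (x + q, y + w) ∈ S) (h2 : (x - q, y - w) ∈ S) : q = 0 ∧ w = 0 := by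
  have h3 := h.2 (subset_convexHull ℝ S h1) (subset_convexHull ℝ S h2)
    ⟨1/2, 1/2, by norm_num, by norm_num, by norm_num, by
      ext <;> simp <;> ring⟩
  simpa using h3

/-- For `r, s ∈ ℝ` and `τ > 0`,
`conv {(x,y) ∈ [0,1]² : x − r ≥ 0, y − s ≥ 0, (x − r)(y − s) ≤ τ}` is a polytope. -/
theorem convexHull_hyperbola_lower_set_is_polytope (r s τ : ℝ) (hτ : 0 < τ) :
    ∃ F : Finset (ℝ × ℝ),
      convexHull ℝ {p : ℝ × ℝ | p.1 ∈ Set.Icc (0:ℝ) 1 ∧ p.2 ∈ Set.Icc (0:ℝ) 1 ∧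
          0 ≤ p.1 - r ∧ 0 ≤ p.2 - s ∧ (p.1 - r) * (p.2 - s) ≤ τ} =
        convexHull ℝ (↑F : Set (ℝ × ℝ)) := by
  set S : Set (ℝ × ℝ) := {p : ℝ × ℝ | p.1 ∈ Set.Icc (0:ℝ) 1 ∧ p.2 ∈ Set.Icc (0:ℝ) 1 ∧
          0 ≤ p.1 - r ∧ 0 ≤ p.2 - s ∧ (p.1 - r) * (p.2 - s) ≤ τ} with hS
  have hc : IsCompact S := by
    refine (isCompact_Icc (a := ((0:ℝ), (0:ℝ))) (b := ((1:ℝ), (1:ℝ)))).of_isClosed_subset ?_ ?_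
    · have c1 : IsClosed {p : ℝ × ℝ | 0 ≤ p.1 - r} := isClosed_le (by fun_prop) (by fun_prop)
      have c2 : IsClosed {p : ℝ × ℝ | 0 ≤ p.2 - s} := isClosed_le (by fun_prop) (by fun_prop)
      have c3 : IsClosed {p : ℝ × ℝ | (p.1 - r) * (p.2 - s) ≤ τ} :=
        isClosed_le (by fun_prop) (by fun_prop)
      exact (isClosed_Icc.preimage continuous_fst).inter
        ((isClosed_Icc.preimage continuous_snd).inter (c1.inter (c2.inter c3)))
    · rintro ⟨x, y⟩ ⟨h1, h2, -⟩
      exact ⟨⟨h1.1, h2.1⟩, ⟨h1.2, h2.2⟩⟩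
  have hcc : IsCompact (convexHull ℝ S) := isCompact_convexHull_aux hc
  have hfin : ((convexHull ℝ S).extremePoints ℝ).Finite := by
    let A : Set ℝ := {max 0 r, 1}
    let B : Set ℝ := {max 0 s, 1}
    have hA : A.Finite := by simp [A]
    have hB : B.Finite := by simp [B]
    have hG : ((A ×ˢ B) ∪ (fun x => (x, s + τ / (x - r))) '' A ∪
        (fun y => (r + τ / (y - s), y)) '' B).Finite :=
      ((hA.prod hB).union (hA.image _)).union (hB.image _)
    refine hG.subset ?_
    rintro ⟨x, y⟩ h
    have hm : (x, y) ∈ S := extremePoints_convexHull_subset h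
    obtain ⟨⟨hx0, hx1⟩, ⟨hy0, hy1⟩, hxr, hys, hxy⟩ := hm
    dsimp only at hx0 hx1 hy0 hy1 hxr hys hxy
    have gx : x ∉ A → 0 < x ∧ x < 1 ∧ 0 < x - r := by
      intro hn
      simp only [A, Set.mem_insert_iff, Set.mem_singleton_iff, not_or] at hn
      have h1 : max 0 r < x := lt_of_le_of_ne (max_le hx0 (by linarith)) (Ne.symm hn.1)
      exact ⟨(le_max_left _ _).trans_lt h1, lt_of_le_of_ne hx1 hn.2,
        by linarith [le_max_right 0 r]⟩
    have gy : y ∉ B → 0 < y ∧ y < 1 ∧ 0 < y - s := by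
      intro hn
      simp only [B, Set.mem_insert_iff, Set.mem_singleton_iff, not_or] at hn
      have h1 : max 0 s < y := lt_of_le_of_ne (max_le hy0 (by linarith)) (Ne.symm hn.1)
      exact ⟨(le_max_left _ _).trans_lt h1, lt_of_le_of_ne hy1 hn.2,
        by linarith [le_max_right 0 s]⟩
    by_cases hxA : x ∈ A <;> by_cases hyB : y ∈ B
    · exact Or.inl (Or.inl ⟨hxA, hyB⟩)
    · obtain ⟨k1, k2, k3⟩ := gy hyB
      rcases hxy.eq_or_lt with he | hl
      · refine Or.inl (Or.inr ⟨x, hxA, ?_⟩)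
        have : x - r ≠ 0 := by rintro h0; rw [h0] at he; linarith
        ext
        · rfl
        · show s + τ / (x - r) = y
          rw [← he]; field_simp; ring
      · exfalso
        obtain ⟨e, he, hh⟩ := exists_small_aux [y, 1 - y, y - s, (τ - (x - r) * (y - s)) / (x - r + 1)]
          (by
            have : 0 < (τ - (x - r) * (y - s)) / (x - r + 1) := div_pos (by linarith) (by linarith)
            simp; refine ⟨k1, k2, by linarith, this⟩)
        simp only [List.forall_mem_cons] at hh
        obtain ⟨e1, e2, e3, e4, -⟩ := hh
        rw [le_div_iff₀ (by linarith)] at e4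
        have hp := mul_nonneg hxr he.le
        have := extreme_aux h 0 e
          ⟨⟨by simpa, by simpa⟩, ⟨by dsimp only; linarith, by dsimp only; linarith⟩,
            by simpa using hxr, by dsimp only; linarith, by dsimp only; nlinarith⟩
          ⟨⟨by simpa, by simpa⟩, ⟨by dsimp only; linarith, by dsimp only; linarith⟩,
            by simpa using hxr, by dsimp only; linarith, by dsimp only; nlinarith⟩
        linarith [this.2]
    · obtain ⟨k1, k2, k3⟩ := gx hxA
      rcases hxy.eq_or_lt with he | hl
      · refine Or.inr ⟨y, hyB, ?_⟩
        have : y - s ≠ 0 := by rintro h0; rw [h0] at he; linarith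
        ext
        · show r + τ / (y - s) = x
          rw [← he]; field_simp; ring
        · rfl
      · exfalso
        obtain ⟨e, he, hh⟩ := exists_small_aux [x, 1 - x, x - r, (τ - (x - r) * (y - s)) / (y - s + 1)]
          (by
            have : 0 < (τ - (x - r) * (y - s)) / (y - s + 1) := div_pos (by linarith) (by linarith)
            simp; refine ⟨k1, k2, by linarith, this⟩)
        simp only [List.forall_mem_cons] at hh
        obtain ⟨e1, e2, e3, e4, -⟩ := hh
        rw [le_div_iff₀ (by linarith)] at e4
        have hp := mul_nonneg hys he.le
        have := extreme_aux h e 0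
          ⟨⟨by dsimp only; linarith, by dsimp only; linarith⟩, ⟨by simpa, by simpa⟩,
            by dsimp only; linarith, by simpa using hys, by dsimp only; nlinarith⟩
          ⟨⟨by dsimp only; linarith, by dsimp only; linarith⟩, ⟨by simpa, by simpa⟩,
            by dsimp only; linarith, by simpa using hys, by dsimp only; nlinarith⟩
        linarith [this.1]
    · exfalso
      obtain ⟨k1, k2, k3⟩ := gx hxA
      obtain ⟨l1, l2, l3⟩ := gy hyB
      obtain ⟨e, he, hh⟩ := exists_small_aux [1, x / (x - r), (1 - x) / (x - r),
          y / (y - s), (1 - y) / (y - s)]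
        (by
          have h1 : 0 < (1 - x) / (x - r) := div_pos (by linarith) k3
          have h2 : 0 < (1 - y) / (y - s) := div_pos (by linarith) l3
          have h3 := div_pos k1 k3
          have h4 := div_pos l1 l3
          simp only [List.forall_mem_cons]
          exact ⟨one_pos, h3, h1, h4, h2, by simp⟩)
      simp only [List.forall_mem_cons] at hh
      obtain ⟨e0, e1, e2, e3, e4, -⟩ := hh
      rw [le_div_iff₀ (by linarith)] at e1 e2 e3 e4
      have p1 := mul_pos he k3
      have p2 := mul_pos he l3
      have p3 := mul_pos p1 p2
      have p4 : 0 ≤ (1 - e) * (x - r) := mul_nonneg (by linarith) k3.le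
      have p5 : 0 ≤ (1 - e) * (y - s) := mul_nonneg (by linarith) l3.le
      have := extreme_aux h (e * (x - r)) (-(e * (y - s)))
          ⟨⟨by dsimp only; linarith, by dsimp only; linarith⟩,
            ⟨by dsimp only; linarith, by dsimp only; linarith⟩,
            by dsimp only; linarith, by dsimp only; linarith, by dsimp only; linarith⟩
          ⟨⟨by dsimp only; linarith, by dsimp only; linarith⟩,
            ⟨by dsimp only; linarith, by dsimp only; linarith⟩,
            by dsimp only; linarith, by dsimp only; linarith, by dsimp only; linarith⟩
      linarith [this.1]
  refine ⟨hfin.toFinset, ?_⟩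
  rw [hfin.coe_toFinset]
  have hk := closure_convexHull_extremePoints hcc (convex_convexHull ℝ S)
  rw [(hfin.isClosed_convexHull (𝕜 := ℝ)).closure_eq] at hk
  exact hk.symm
end

section
/- Let a₀, a₁ ∈ ℝ and a₂ > 0, and define S₀ = {(x,y) ∈ [0,1]² : y = a₀ + a₁x + a₂x²}. Then conv(S₀) = {(x,y) ∈ [0,1]² : y ≥ a₀ + a₁x + a₂x²} ∩ conv({(x,y) ∈ [0,1]² : y ≤ a₀ + a₁x + a₂x²}). -/
/-- For `a₀, a₁ ∈ ℝ`, `a₂ > 0` and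
`S₀ = {(x,y) ∈ [0,1]² : y = a₀ + a₁x + a₂x²}`,
`conv S₀ = {(x,y) ∈ [0,1]² : y ≥ a₀ + a₁x + a₂x²} ∩ conv {(x,y) ∈ [0,1]² : y ≤ a₀ + a₁x + a₂x²}`. -/
theorem convexHull_parabola (a₀ a₁ a₂ : ℝ) (ha₂ : 0 < a₂) :
    convexHull ℝ {p : ℝ × ℝ | p.1 ∈ Set.Icc (0:ℝ) 1 ∧ p.2 ∈ Set.Icc (0:ℝ) 1 ∧
        p.2 = a₀ + a₁ * p.1 + a₂ * p.1 ^ 2} =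
      {p : ℝ × ℝ | p.1 ∈ Set.Icc (0:ℝ) 1 ∧ p.2 ∈ Set.Icc (0:ℝ) 1 ∧
        a₀ + a₁ * p.1 + a₂ * p.1 ^ 2 ≤ p.2} ∩
      convexHull ℝ {p : ℝ × ℝ | p.1 ∈ Set.Icc (0:ℝ) 1 ∧ p.2 ∈ Set.Icc (0:ℝ) 1 ∧
        p.2 ≤ a₀ + a₁ * p.1 + a₂ * p.1 ^ 2} := by
  apply Set.Subset.antisymm
  · apply convexHull_min
    · rintro p ⟨h1, h2, h3⟩
      exact ⟨⟨h1, h2, h3.ge⟩, subset_convexHull ℝ _ ⟨h1, h2, h3.le⟩⟩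
    · refine Convex.inter ?_ (convex_convexHull ℝ _)
      rintro ⟨x, y⟩ ⟨⟨hx0, hx1⟩, ⟨hy0, hy1⟩, h⟩ ⟨u, v⟩ ⟨⟨hu0, hu1⟩, ⟨hv0, hv1⟩, h'⟩ a b ha hb hab
      simp only [Prod.smul_mk, Prod.mk_add_mk, smul_eq_mul, Set.mem_ofPred_eq, Set.mem_Icc] at *
      obtain rfl : b = 1 - a := by linarith
      refine ⟨⟨by positivity, by nlinarith⟩, ⟨by positivity, by nlinarith⟩, ?_⟩
      have k1 := mul_le_mul_of_nonneg_left h ha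
      have k2 := mul_le_mul_of_nonneg_left h' hb
      have k3 : 0 ≤ a₂ * (a * (1 - a)) * (x - u) ^ 2 := by positivity
      nlinarith
  · rintro p ⟨⟨hp1, hp2, hp3⟩, hpc⟩
    by_cases hp : p.2 = a₀ + a₁ * p.1 + a₂ * p.1 ^ 2
    · exact subset_convexHull ℝ _ ⟨hp1, hp2, hp⟩
    set K := convexHull ℝ {p : ℝ × ℝ | p.1 ∈ Set.Icc (0:ℝ) 1 ∧ p.2 ∈ Set.Icc (0:ℝ) 1 ∧
        p.2 = a₀ + a₁ * p.1 + a₂ * p.1 ^ 2} with hK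
    have hKc : Convex ℝ K := convex_convexHull ℝ _
    have key : convexHull ℝ {p : ℝ × ℝ | p.1 ∈ Set.Icc (0:ℝ) 1 ∧ p.2 ∈ Set.Icc (0:ℝ) 1 ∧
        p.2 ≤ a₀ + a₁ * p.1 + a₂ * p.1 ^ 2} ⊆ {q | ∃ t : ℝ, 0 < t ∧ p + t • (q - p) ∈ K} := by
      apply convexHull_min
      · rintro q ⟨hq1, hq2, hq3⟩
        let g : ℝ → ℝ := fun t => (p.2 + t * (q.2 - p.2)) - (a₀ + a₁ * (p.1 + t * (q.1 - p.1))
          + a₂ * (p.1 + t * (q.1 - p.1)) ^ 2)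
        have hg : ContinuousOn g (Set.Icc 0 1) := by
          apply Continuous.continuousOn
          fun_prop
        obtain ⟨t, ⟨ht0, ht1⟩, ht⟩ : (0:ℝ) ∈ g '' Set.Icc 0 1 := by
          apply intermediate_value_Icc' zero_le_one hg
          constructor
          · simp only [g]; ring_nf; ring_nf at hq3; linarith
          · simp only [g]; ring_nf; ring_nf at hp3; linarith
        have ht' : 0 < t := by
          rcases ht0.lt_or_eq with h | h
          · exact h
          · subst h
            exfalso; apply hp
            simp only [g] at ht
            ring_nf at ht ⊢
            linarith
        refine ⟨t, ht', subset_convexHull ℝ _ ?_⟩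
        simp only [Set.mem_Icc, Set.mem_ofPred_eq, Prod.fst_add, Prod.snd_add, Prod.smul_fst,
          Prod.smul_snd, Prod.fst_sub, Prod.snd_sub, smul_eq_mul] at *
        refine ⟨⟨by nlinarith, by nlinarith⟩, ⟨by nlinarith, by nlinarith⟩, ?_⟩
        simp only [g] at ht
        linarith
      · rintro q ⟨t, ht, hq⟩ r ⟨s, hs, hr⟩ a b ha hb hab
        have hD : 0 < a * s + b * t := by
          rcases ha.lt_or_eq with h | h
          · positivity
          · have : b = 1 := by linarith
            subst this; positivity
        refine ⟨t * s / (a * s + b * t), by positivity, ?_⟩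
        have := hKc hq hr (a := a * s / (a * s + b * t)) (b := b * t / (a * s + b * t))
          (by positivity) (by positivity) (by field_simp)
        convert this using 1
        have hne := hD.ne'
        have hb' : b = 1 - a := by linarith
        have aux : ∀ x y z D : ℝ, D ≠ 0 → D = a * s + b * t →
            x + t * s / D * (a * y + b * z - x) =
              a * s / D * (x + t * (y - x)) + b * t / D * (x + s * (z - x)) := by
          intro x y z D h0 h1
          field_simp
          rw [h1, hb']
          ring
        ext
        · exact aux p.1 q.1 r.1 _ hne rfl
        · exact aux p.2 q.2 r.2 _ hne rfl
    obtain ⟨t, _, ht⟩ := key hpc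
    simpa using ht
end

section
/- Let a₀, a₁ ∈ ℝ and a₂ > 0. Then conv({(x,y) ∈ [0,1]² : y ≤ a₀ + a₁x + a₂x²}) is a polytope; that is, there exists a finite set F ⊆ ℝ² such that this convex hull equals conv(F). -/
lemma aux_ivt (f : ℝ → ℝ) (hf : Continuous f) (a x c : ℝ)
    (h : ∀ z ∈ Set.uIcc a x, z ≠ a → f z ≠ c) (hx : c ≤ f x) : c ≤ f a := by
  by_contra! hc
  have hm : c ∈ Set.uIcc (f a) (f x) := Set.mem_uIcc.2 (Or.inl ⟨hc.le, hx⟩)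
  obtain ⟨z, hz, hzc⟩ := intermediate_value_uIcc hf.continuousOn hm
  refine h z hz ?_ hzc
  rintro rfl
  exact hc.ne hzc

lemma aux_hull (T : Set (ℝ × ℝ)) (u v a b s y : ℝ) (ha : 0 ≤ a) (hb : 0 ≤ b)
    (hs : 0 ≤ s) (hs1 : s ≤ 1) (hu0 : (u, 0) ∈ T) (hua : (u, a) ∈ T)
    (hv0 : (v, 0) ∈ T) (hvb : (v, b) ∈ T) (hy : 0 ≤ y) (hyc : y ≤ (1 - s) * a + s * b) :
    ((1 - s) * u + s * v, y) ∈ convexHull ℝ T := by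
  have hC := convex_convexHull ℝ T
  have hsub := subset_convexHull ℝ T
  obtain ⟨l, hl0, hl1, hl⟩ : ∃ l : ℝ, 0 ≤ l ∧ l ≤ 1 ∧ y = l * ((1 - s) * a + s * b) := by
    have hnn : 0 ≤ (1 - s) * a + s * b := hy.trans hyc
    rcases hnn.eq_or_lt with h | h
    · exact ⟨0, le_rfl, zero_le_one, by linarith⟩
    · exact ⟨y / ((1 - s) * a + s * b), by positivity, (div_le_one h).2 hyc, by field_simp⟩
  have h1 : (u, l * a) ∈ convexHull ℝ T := by
    have := hC (hsub hu0) (hsub hua) (sub_nonneg.2 hl1) hl0 (by ring)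
    convert this using 1
    ext <;> simp
    ring
  have h2 : (v, l * b) ∈ convexHull ℝ T := by
    have := hC (hsub hv0) (hsub hvb) (sub_nonneg.2 hl1) hl0 (by ring)
    convert this using 1
    ext <;> simp
    ring
  have := hC h1 h2 (sub_nonneg.2 hs1) hs (by ring)
  convert this using 1
  ext <;> simp
  rw [hl]; ring

lemma aux_fin (a₀ a₁ a₂ c : ℝ) (ha₂ : 0 < a₂) :
    {x : ℝ | a₀ + a₁ * x + a₂ * x ^ 2 = c}.Finite := by
  by_cases h : ∃ r : ℝ, a₀ + a₁ * r + a₂ * r ^ 2 = c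
  · obtain ⟨r, hr⟩ := h
    refine Set.Finite.subset (Set.toFinite {r, -a₁ / a₂ - r}) ?_
    intro x hx
    have hx' : a₀ + a₁ * x + a₂ * x ^ 2 = c := hx
    have : (x - r) * (a₁ + a₂ * (x + r)) = 0 := by linarith
    rcases mul_eq_zero.1 this with h | h
    · left; linarith
    · right
      show x = _
      field_simp
      linarith
  · convert Set.finite_empty
    ext x
    simp only [Set.mem_setOf_eq, Set.mem_empty_iff_false, iff_false]
    exact fun hx => h ⟨x, hx⟩

/-- For `a₀, a₁ ∈ ℝ` and `a₂ > 0`,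
`conv {(x,y) ∈ [0,1]² : y ≤ a₀ + a₁x + a₂x²}` is a polytope. -/
theorem convexHull_below_parabola_is_polytope (a₀ a₁ a₂ : ℝ) (ha₂ : 0 < a₂) :
    ∃ F : Finset (ℝ × ℝ),
      convexHull ℝ {p : ℝ × ℝ | p.1 ∈ Set.Icc (0:ℝ) 1 ∧ p.2 ∈ Set.Icc (0:ℝ) 1 ∧
          p.2 ≤ a₀ + a₁ * p.1 + a₂ * p.1 ^ 2} =
        convexHull ℝ (↑F : Set (ℝ × ℝ)) := by
  obtain ⟨q, hq⟩ : ∃ q : ℝ → ℝ, q = fun x => a₀ + a₁ * x + a₂ * x ^ 2 := ⟨_, rfl⟩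
  have hqc : Continuous q := by rw [hq]; fun_prop
  obtain ⟨X, hX⟩ : ∃ X : Set ℝ, X = ({0, 1} ∪ {x | q x = 0} ∪ {x | q x = 1}) ∩ Set.Icc 0 1 :=
    ⟨_, rfl⟩
  have hXf : X.Finite := by
    rw [hX, hq]
    exact (((Set.toFinite {0, 1}).union (aux_fin a₀ a₁ a₂ 0 ha₂)).union
      (aux_fin a₀ a₁ a₂ 1 ha₂)).inter_of_left _
  obtain ⟨S, hS⟩ : ∃ S : Set (ℝ × ℝ), S = {p : ℝ × ℝ | p.1 ∈ Set.Icc (0:ℝ) 1 ∧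
    p.2 ∈ Set.Icc (0:ℝ) 1 ∧ p.2 ≤ a₀ + a₁ * p.1 + a₂ * p.1 ^ 2} := ⟨_, rfl⟩
  rw [← hS]
  obtain ⟨T, hT⟩ : ∃ T : Set (ℝ × ℝ),
    T = ((fun x => (x, (0:ℝ))) '' X ∪ (fun x => (x, min 1 (q x))) '' X) ∩ S := ⟨_, rfl⟩
  have hTf : T.Finite := by
    rw [hT]
    exact ((hXf.image _).union (hXf.image _)).inter_of_left _
  refine ⟨hTf.toFinset, ?_⟩
  rw [hTf.coe_toFinset]
  have hmem : ∀ u ∈ X, 0 ≤ q u → (u, (0:ℝ)) ∈ T ∧ (u, min 1 (q u)) ∈ T := by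
    intro u hu h0
    have hu1 : u ∈ Set.Icc (0:ℝ) 1 := by rw [hX] at hu; exact hu.2
    rw [hT]
    refine ⟨⟨Or.inl ⟨u, hu, rfl⟩, ?_⟩, ⟨Or.inr ⟨u, hu, rfl⟩, ?_⟩⟩
    · rw [hS]; exact ⟨hu1, by simp, by simpa [hq] using h0⟩
    · rw [hS]
      exact ⟨hu1, ⟨le_min zero_le_one h0, min_le_left _ _⟩,
        (min_le_right _ _).trans (by simp [hq])⟩
  apply le_antisymm
  · apply convexHull_min _ (convex_convexHull ℝ T)
    rintro ⟨x, y⟩ hp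
    rw [hS] at hp
    obtain ⟨⟨hx0, hx1⟩, ⟨hy0, hy1⟩, hyq⟩ := hp
    dsimp only at hx0 hx1 hy0 hy1 hyq
    have hyq' : y ≤ q x := by rw [hq]; exact hyq
    have hqx : 0 ≤ q x := hy0.trans hyq'
    by_cases hxX : x ∈ X
    · obtain ⟨h1, h2⟩ := hmem x hxX hqx
      have := aux_hull T x x _ _ 0 y (le_min zero_le_one hqx) (le_min zero_le_one hqx) le_rfl
        zero_le_one h1 h2 h1 h2 hy0 (by simpa using ⟨hy1, hyq'⟩)
      simpa using this
    · have h0X : (0:ℝ) ∈ X := by rw [hX]; simp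
      have h1X : (1:ℝ) ∈ X := by rw [hX]; simp
      obtain ⟨u, ⟨huX, hux⟩, hu⟩ := Set.exists_max_image (X ∩ Set.Iic x) id
        (hXf.inter_of_left _) ⟨0, h0X, hx0⟩
      obtain ⟨v, ⟨hvX, hvx⟩, hv⟩ := Set.exists_min_image (X ∩ Set.Ici x) id
        (hXf.inter_of_left _) ⟨1, h1X, hx1⟩
      simp only [id, Set.mem_Iic, Set.mem_Ici] at hu hv hux hvx
      have hux' : u < x := lt_of_le_of_ne hux (by rintro rfl; exact hxX huX)
      have hvx' : x < v := lt_of_le_of_ne hvx (by rintro rfl; exact hxX hvX)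
      have hu01 : u ∈ Set.Icc (0:ℝ) 1 := by rw [hX] at huX; exact huX.2
      have hv01 : v ∈ Set.Icc (0:ℝ) 1 := by rw [hX] at hvX; exact hvX.2
      have hno : ∀ z, u < z → z < v → q z ≠ 0 ∧ q z ≠ 1 := by
        intro z h1 h2
        have hzX : z ∉ X := by
          intro hz
          rcases le_total z x with h | h
          · exact absurd (hu z ⟨hz, h⟩) (not_le.2 h1)
          · exact absurd (hv z ⟨hz, h⟩) (not_le.2 h2)
        have hz01 : z ∈ Set.Icc (0:ℝ) 1 := ⟨hu01.1.trans h1.le, h2.le.trans hv01.2⟩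
        rw [hX] at hzX
        exact ⟨fun h => hzX ⟨Or.inl (Or.inr h), hz01⟩, fun h => hzX ⟨Or.inr h, hz01⟩⟩
      have hnu : ∀ z ∈ Set.uIcc u x, z ≠ u → q z ≠ 0 ∧ q z ≠ 1 := by
        intro z hz hne
        rw [Set.uIcc_of_le hux] at hz
        exact hno z (lt_of_le_of_ne hz.1 hne.symm) (hz.2.trans_lt hvx')
      have hnv : ∀ z ∈ Set.uIcc v x, z ≠ v → q z ≠ 0 ∧ q z ≠ 1 := by
        intro z hz hne
        rw [Set.uIcc_of_ge hvx] at hz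
        exact hno z (hux'.trans_le hz.1) (lt_of_le_of_ne hz.2 hne)
      have hqu := aux_ivt q hqc u x 0 (fun z hz hn => (hnu z hz hn).1) hqx
      have hqv := aux_ivt q hqc v x 0 (fun z hz hn => (hnv z hz hn).1) hqx
      obtain ⟨s, hs⟩ : ∃ s, s = (x - u) / (v - u) := ⟨_, rfl⟩
      have hvu : 0 < v - u := by linarith
      have hs0 : 0 ≤ s := by rw [hs]; exact div_nonneg (by linarith) hvu.le
      have hs1 : s ≤ 1 := by rw [hs, div_le_one hvu]; linarith
      have hxs : x = (1 - s) * u + s * v := by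
        have : s * (v - u) = x - u := by rw [hs]; field_simp
        linarith
      have hchord : y ≤ (1 - s) * min 1 (q u) + s * min 1 (q v) := by
        rcases le_total 1 (q x) with h | h
        · have h1 := aux_ivt q hqc u x 1 (fun z hz hn => (hnu z hz hn).2) h
          have h2 := aux_ivt q hqc v x 1 (fun z hz hn => (hnv z hz hn).2) h
          rw [min_eq_left h1, min_eq_left h2]; linarith
        · have h1 := aux_ivt (fun z => -q z) hqc.neg u x (-1)
            (fun z hz hn he => (hnu z hz hn).2 (neg_injective he)) (neg_le_neg h)
          have h2 := aux_ivt (fun z => -q z) hqc.neg v x (-1)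
            (fun z hz hn he => (hnv z hz hn).2 (neg_injective he)) (neg_le_neg h)
          rw [min_eq_right (neg_le_neg_iff.1 h1), min_eq_right (neg_le_neg_iff.1 h2)]
          refine hyq'.trans ?_
          have key : (1 - s) * q u + s * q v - q x = a₂ * (s * (1 - s)) * (v - u) ^ 2 := by
            rw [hq, hxs]; ring
          have : 0 ≤ a₂ * (s * (1 - s)) * (v - u) ^ 2 :=
            mul_nonneg (mul_nonneg ha₂.le (mul_nonneg hs0 (sub_nonneg.2 hs1))) (sq_nonneg _)
          linarith
      obtain ⟨h1, h2⟩ := hmem u huX hqu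
      obtain ⟨h3, h4⟩ := hmem v hvX hqv
      have := aux_hull T u v _ _ s y (le_min zero_le_one hqu) (le_min zero_le_one hqv) hs0
        hs1 h1 h2 h3 h4 hy0 hchord
      rwa [← hxs] at this
  · apply convexHull_mono
    rw [hT]
    exact Set.inter_subset_right
end

section
/- The convex hull of the set {(x,y,w) ∈ [0,1]³ : w = xy} equals the McCormick polytope {(x,y,w) ∈ ℝ³ : 0 ≤ x ≤ 1, 0 ≤ y ≤ 1, w ≥ 0, w ≥ x + y − 1, w ≤ x, w ≤ y}. -/
/-- `conv {(x,y,w) ∈ [0,1]³ : w = xy}` equals the McCormick polytope. -/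
theorem convexHull_bilinear_eq_mcCormick :
    convexHull ℝ {p : ℝ × ℝ × ℝ | p.1 ∈ Set.Icc (0:ℝ) 1 ∧ p.2.1 ∈ Set.Icc (0:ℝ) 1 ∧
        p.2.2 ∈ Set.Icc (0:ℝ) 1 ∧ p.2.2 = p.1 * p.2.1} =
      {p : ℝ × ℝ × ℝ | 0 ≤ p.1 ∧ p.1 ≤ 1 ∧ 0 ≤ p.2.1 ∧ p.2.1 ≤ 1 ∧
        0 ≤ p.2.2 ∧ p.1 + p.2.1 - 1 ≤ p.2.2 ∧ p.2.2 ≤ p.1 ∧ p.2.2 ≤ p.2.1} := by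
  apply Set.Subset.antisymm
  · apply convexHull_min
    · rintro ⟨x, y, w⟩ ⟨⟨hx0, hx1⟩, ⟨hy0, hy1⟩, ⟨hw0, hw1⟩, h⟩
      simp only at *
      subst h
      refine ⟨hx0, hx1, hy0, hy1, hw0, ?_, ?_, ?_⟩ <;> simp only <;> nlinarith
    · rintro ⟨x, y, w⟩ ⟨h1, h2, h3, h4, h5, h6, h7, h8⟩ ⟨x', y', w'⟩
        ⟨g1, g2, g3, g4, g5, g6, g7, g8⟩ a b ha hb hab
      simp only at *
      obtain rfl : b = 1 - a := by linarith
      refine ⟨?_, ?_, ?_, ?_, ?_, ?_, ?_, ?_⟩ <;>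
        simp only [Prod.smul_mk, Prod.mk_add_mk, smul_eq_mul] <;> nlinarith
  · rintro ⟨x, y, w⟩ ⟨h1, h2, h3, h4, h5, h6, h7, h8⟩
    simp only at *
    set S := {p : ℝ × ℝ × ℝ | p.1 ∈ Set.Icc (0:ℝ) 1 ∧ p.2.1 ∈ Set.Icc (0:ℝ) 1 ∧
        p.2.2 ∈ Set.Icc (0:ℝ) 1 ∧ p.2.2 = p.1 * p.2.1} with hS
    have key := (convex_convexHull ℝ S).sum_mem (t := (Finset.univ : Finset (Fin 4)))
      (w := ![w, x - w, y - w, 1 - x - y + w])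
      (z := ![(1, 1, 1), (1, 0, 0), (0, 1, 0), (0, 0, 0)])
      (by
        intro i _
        fin_cases i <;> simp <;> linarith)
      (by simp [Fin.sum_univ_four]; ring)
      (by
        intro i _
        apply subset_convexHull
        fin_cases i <;> simp [hS])
    have e : ((x, y, w) : ℝ × ℝ × ℝ) = ∑ i : Fin 4, (![w, x - w, y - w, 1 - x - y + w] i : ℝ) •
        ((![(1, 1, 1), (1, 0, 0), (0, 1, 0), (0, 0, 0)] : Fin 4 → ℝ × ℝ × ℝ) i) := by
      simp [Fin.sum_univ_four]
    rw [e]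
    exact key
end

section
/- Let a, b, c ∈ ℝ with a ≠ 0 and b ≠ 0, and define S₀ = {(x,y,w) ∈ [0,1]³ : ax + by + c = 0, w = xy}. Let [α,β] = {y ∈ [0,1] : (−by − c)/a ∈ [0,1]} (assumed to be a nonempty interval with α < β), and let B₀ = {(y,w) ∈ [α,β] × [0,1] : w = (−c/a)y − (b/a)y²}. Then conv(S₀) = {(x,y,w) ∈ ℝ × [α,β] × [0,1] : (y,w) ∈ conv(B₀), x = (−by − c)/a}. -/
/-- For `a, b, c ∈ ℝ` with `a ≠ 0`, `b ≠ 0`, with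
`S₀ = {(x,y,w) ∈ [0,1]³ : ax + by + c = 0, w = xy}`,
`[α,β] = {y ∈ [0,1] : (−by − c)/a ∈ [0,1]}` (nonempty with `α < β`), and
`B₀ = {(y,w) ∈ [α,β] × [0,1] : w = (−c/a)y − (b/a)y²}`, we have
`conv S₀ = {(x,y,w) ∈ ℝ × [α,β] × [0,1] : (y,w) ∈ conv B₀, x = (−by − c)/a}`. -/
theorem convexHull_bilinear_row_q_eq_zero (a b c α β : ℝ) (ha : a ≠ 0) (hb : b ≠ 0)
    (hαβ : α < β)
    (hIcc : Set.Icc α β = {y : ℝ | y ∈ Set.Icc (0:ℝ) 1 ∧ (-b * y - c) / a ∈ Set.Icc (0:ℝ) 1}) :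
    convexHull ℝ {p : ℝ × ℝ × ℝ | p.1 ∈ Set.Icc (0:ℝ) 1 ∧ p.2.1 ∈ Set.Icc (0:ℝ) 1 ∧
        p.2.2 ∈ Set.Icc (0:ℝ) 1 ∧ a * p.1 + b * p.2.1 + c = 0 ∧ p.2.2 = p.1 * p.2.1} =
      {p : ℝ × ℝ × ℝ | p.2.1 ∈ Set.Icc α β ∧ p.2.2 ∈ Set.Icc (0:ℝ) 1 ∧
        (p.2.1, p.2.2) ∈ convexHull ℝ {z : ℝ × ℝ | z.1 ∈ Set.Icc α β ∧ z.2 ∈ Set.Icc (0:ℝ) 1 ∧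
          z.2 = (-c / a) * z.1 - (b / a) * z.1 ^ 2} ∧
        p.1 = (-b * p.2.1 - c) / a} := by
  have key : ∀ y, y ∈ Set.Icc α β ↔
      (y ∈ Set.Icc (0:ℝ) 1 ∧ (-b * y - c) / a ∈ Set.Icc (0:ℝ) 1) := by
    intro y
    rw [hIcc]
    rfl
  apply Set.Subset.antisymm
  · apply convexHull_min
    · rintro ⟨x, y, w⟩ ⟨hx, hy, hw, h, hxy⟩
      simp only at hx hy hw h hxy
      have hx' : x = (-b * y - c) / a := by
        rw [eq_div_iff ha]; linarith
      have hyI : y ∈ Set.Icc α β := (key y).2 ⟨hy, hx' ▸ hx⟩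
      refine ⟨hyI, hw, subset_convexHull ℝ _ ⟨hyI, hw, ?_⟩, hx'⟩
      simp only
      rw [hxy, hx']
      field_simp
      ring
    · rintro ⟨x, y, w⟩ ⟨h1, h2, h3, h4⟩ ⟨x', y', w'⟩ ⟨k1, k2, k3, k4⟩ s t hs ht hst
      refine ⟨convex_Icc α β h1 k1 hs ht hst, convex_Icc (0:ℝ) 1 h2 k2 hs ht hst,
        convex_convexHull ℝ _ h3 k3 hs ht hst, ?_⟩
      simp only [Prod.smul_mk, Prod.mk_add_mk, smul_eq_mul] at h4 k4 ⊢
      rw [h4, k4]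
      have : t = 1 - s := by linarith
      subst this
      field_simp
      ring
  · rintro ⟨x, y, w⟩ ⟨-, -, h3, h4⟩
    simp only at h3 h4
    subst h4
    have hsub := convexHull_min (𝕜 := ℝ)
      (s := {z : ℝ × ℝ | z.1 ∈ Set.Icc α β ∧ z.2 ∈ Set.Icc (0:ℝ) 1 ∧
          z.2 = (-c / a) * z.1 - (b / a) * z.1 ^ 2})
      (t := {z : ℝ × ℝ | ((-b * z.1 - c) / a, z.1, z.2) ∈
        convexHull ℝ {p : ℝ × ℝ × ℝ | p.1 ∈ Set.Icc (0:ℝ) 1 ∧ p.2.1 ∈ Set.Icc (0:ℝ) 1 ∧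
        p.2.2 ∈ Set.Icc (0:ℝ) 1 ∧ a * p.1 + b * p.2.1 + c = 0 ∧ p.2.2 = p.1 * p.2.1}})
      ?_ ?_
    · exact hsub h3
    · rintro ⟨y, w⟩ ⟨hy, hw, h⟩
      simp only at hy hw h
      refine subset_convexHull ℝ _ ⟨((key y).1 hy).2, ((key y).1 hy).1, hw, ?_, ?_⟩
      · simp only
        field_simp
        ring
      · simp only
        rw [h]
        field_simp
        ring
    · rintro ⟨y, w⟩ h ⟨y', w'⟩ k s t hs ht hst
      have := convex_convexHull ℝ _ h k hs ht hst
      simp only [Prod.smul_mk, Prod.mk_add_mk, smul_eq_mul, Set.mem_setOf_eq] at this ⊢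
      convert this using 2
      have : t = 1 - s := by linarith
      subst this
      field_simp
      ring
end

section
/- Let n₁, n₂, m be positive integers, let E ⊆ {1,…,n₁} × {1,…,n₂}, and for each k ∈ {1,…,m} let Q_k ∈ ℝ^{n₁×n₂}, a_k ∈ ℝ^{n₁}, b_k ∈ ℝ^{n₂}, c_k ∈ ℝ. For each k, let S^k = {(x,y,w) ∈ [0,1]^{n₁+n₂+|E|} : Σ_{(i,j)∈E}(Q_k)_{ij} w_{ij} + a_kᵀx + b_kᵀy + c_k = 0 and w_{ij} = x_i y_j for all (i,j) ∈ E}, and let T^k be the set of tuples (x,y,H,w) with x ∈ ℝ^{n₁}, y ∈ ℝ^{n₂}, H ∈ ℝ^{(n₁+n₂)×(n₁+n₂)}, w ∈ ℝ^{E}, such that Σ_{(i,j)∈E}(Q_k)_{ij} w_{ij} + a_kᵀx + b_kᵀy + c_k = 0, w_{ij} = ½(H_{i,(j+n₁)} + H_{(j+n₁),i}) for all (i,j) ∈ E, and the block matrix [[H, z],[zᵀ, 1]] with z = (x,y) is positive semidefinite. Define S^{SDP} = ⋂_{k=1}^m T^k and S^{SOCP} = ⋂_{k=1}^m conv(S^k).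 Then proj_{x,y,w}(S^{SDP}) ⊇ S^{SOCP}, where proj_{x,y,w} denotes the image under the map (x,y,H,w) ↦ (x,y,w). -/
/-- The projection of the SDP relaxation `S^{SDP} = ⋂ₖ T^k` onto `(x,y,w)`
contains the SOCP relaxation `S^{SOCP} = ⋂ₖ conv(S^k)`. -/
theorem proj_SDP_supset_SOCP (n₁ n₂ m : ℕ) (hn₁ : 0 < n₁) (hn₂ : 0 < n₂) (hm : 0 < m)
    (E : Finset (Fin n₁ × Fin n₂))
    (Q : Fin m → Matrix (Fin n₁) (Fin n₂) ℝ) (a : Fin m → Fin n₁ → ℝ)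
    (b : Fin m → Fin n₂ → ℝ) (c : Fin m → ℝ)
    (S : Fin m → Set ((Fin n₁ → ℝ) × (Fin n₂ → ℝ) × (↥E → ℝ)))
    (hS : ∀ k, S k = {p | (∀ i, p.1 i ∈ Set.Icc (0:ℝ) 1) ∧ (∀ j, p.2.1 j ∈ Set.Icc (0:ℝ) 1) ∧
        (∀ e : ↥E, p.2.2 e ∈ Set.Icc (0:ℝ) 1) ∧
        (∑ e : ↥E, Q k (e : Fin n₁ × Fin n₂).1 (e : Fin n₁ × Fin n₂).2 * p.2.2 e) +
          (∑ i, a k i * p.1 i) + (∑ j, b k j * p.2.1 j) + c k = 0 ∧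
        ∀ e : ↥E, p.2.2 e = p.1 (e : Fin n₁ × Fin n₂).1 * p.2.1 (e : Fin n₁ × Fin n₂).2})
    (T : Fin m → Set ((Fin n₁ → ℝ) × (Fin n₂ → ℝ) ×
        Matrix (Fin (n₁ + n₂)) (Fin (n₁ + n₂)) ℝ × (↥E → ℝ)))
    (hT : ∀ k, T k = {p | (∑ e : ↥E, Q k (e : Fin n₁ × Fin n₂).1 (e : Fin n₁ × Fin n₂).2 *
            p.2.2.2 e) + (∑ i, a k i * p.1 i) + (∑ j, b k j * p.2.1 j) + c k = 0 ∧
        (∀ e : ↥E, p.2.2.2 e = (p.2.2.1 (Fin.castAdd n₂ (e : Fin n₁ × Fin n₂).1)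
            (Fin.natAdd n₁ (e : Fin n₁ × Fin n₂).2) +
          p.2.2.1 (Fin.natAdd n₁ (e : Fin n₁ × Fin n₂).2)
            (Fin.castAdd n₂ (e : Fin n₁ × Fin n₂).1)) / 2) ∧
        (Matrix.fromBlocks p.2.2.1
          (Matrix.of fun i (_ : Unit) => Fin.append p.1 p.2.1 i)
          (Matrix.of fun (_ : Unit) j => Fin.append p.1 p.2.1 j)
          (1 : Matrix Unit Unit ℝ)).PosSemidef}) :
    (⋂ k, convexHull ℝ (S k)) ⊆
      (fun p : (Fin n₁ → ℝ) × (Fin n₂ → ℝ) ×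
          Matrix (Fin (n₁ + n₂)) (Fin (n₁ + n₂)) ℝ × (↥E → ℝ) =>
        (p.1, p.2.1, p.2.2.2)) '' ⋂ k, T k := by
  intro p hp
  rw [Set.mem_iInter] at hp
  have hlin : ∀ k, (∑ e : ↥E, Q k (e : Fin n₁ × Fin n₂).1 (e : Fin n₁ × Fin n₂).2 * p.2.2 e) +
          (∑ i, a k i * p.1 i) + (∑ j, b k j * p.2.1 j) + c k = 0 := by
    intro k
    have hconv : Convex ℝ {p : (Fin n₁ → ℝ) × (Fin n₂ → ℝ) × (↥E → ℝ) |
        (∑ e : ↥E, Q k (e : Fin n₁ × Fin n₂).1 (e : Fin n₁ × Fin n₂).2 * p.2.2 e) +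
          (∑ i, a k i * p.1 i) + (∑ j, b k j * p.2.1 j) + c k = 0} := by
      intro u hu v hv s t hs ht hst
      simp only [Set.mem_ofPred_eq] at hu hv ⊢
      simp only [Prod.fst_add, Prod.snd_add, Prod.smul_fst, Prod.smul_snd, Pi.add_apply,
        Pi.smul_apply, smul_eq_mul, mul_add, Finset.sum_add_distrib, mul_left_comm _ s,
        mul_left_comm _ t, ← Finset.mul_sum]
      linear_combination s * hu + t * hv - c k * hst
    refine convexHull_min ?_ hconv (hp k)
    intro u hu
    rw [hS k] at hu
    exact hu.2.2.2.1
  have hH : ∃ H : Matrix (Fin (n₁ + n₂)) (Fin (n₁ + n₂)) ℝ,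
      (∀ e : ↥E, p.2.2 e = (H (Fin.castAdd n₂ (e : Fin n₁ × Fin n₂).1)
            (Fin.natAdd n₁ (e : Fin n₁ × Fin n₂).2) +
          H (Fin.natAdd n₁ (e : Fin n₁ × Fin n₂).2)
            (Fin.castAdd n₂ (e : Fin n₁ × Fin n₂).1)) / 2) ∧
        (Matrix.fromBlocks H
          (Matrix.of fun i (_ : Unit) => Fin.append p.1 p.2.1 i)
          (Matrix.of fun (_ : Unit) j => Fin.append p.1 p.2.1 j)
          (1 : Matrix Unit Unit ℝ)).PosSemidef := by
    have hconv : Convex ℝ {p : (Fin n₁ → ℝ) × (Fin n₂ → ℝ) × (↥E → ℝ) |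
      ∃ H : Matrix (Fin (n₁ + n₂)) (Fin (n₁ + n₂)) ℝ,
      (∀ e : ↥E, p.2.2 e = (H (Fin.castAdd n₂ (e : Fin n₁ × Fin n₂).1)
            (Fin.natAdd n₁ (e : Fin n₁ × Fin n₂).2) +
          H (Fin.natAdd n₁ (e : Fin n₁ × Fin n₂).2)
            (Fin.castAdd n₂ (e : Fin n₁ × Fin n₂).1)) / 2) ∧
        (Matrix.fromBlocks H
          (Matrix.of fun i (_ : Unit) => Fin.append p.1 p.2.1 i)
          (Matrix.of fun (_ : Unit) j => Fin.append p.1 p.2.1 j)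
          (1 : Matrix Unit Unit ℝ)).PosSemidef} := by
      rintro u ⟨H, hu, hH⟩ v ⟨K, hv, hK⟩ s t hs ht hst
      have happ : ∀ i, Fin.append (s • u.1 + t • v.1) (s • u.2.1 + t • v.2.1) i =
          s * Fin.append u.1 u.2.1 i + t * Fin.append v.1 v.2.1 i := by
        intro i
        refine Fin.addCases (fun i => ?_) (fun i => ?_) i <;> simp
      refine ⟨s • H + t • K, ?_, ?_⟩
      · intro e
        simp only [Prod.snd_add, Prod.smul_snd, Pi.add_apply,
          Pi.smul_apply, smul_eq_mul, Matrix.add_apply, Matrix.smul_apply, hu e, hv e]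
        ring
      · convert (hH.smul hs).add (hK.smul ht) using 1
        ext i j
        rcases i with i | i <;> rcases j with j | j <;> simp [happ, hst]
    refine convexHull_min ?_ hconv (hp ⟨0, hm⟩)
    intro u hu
    rw [hS] at hu
    refine ⟨Matrix.vecMulVec (Fin.append u.1 u.2.1) (Fin.append u.1 u.2.1), ?_, ?_⟩
    · intro e
      rw [hu.2.2.2.2 e]
      simp only [Matrix.vecMulVec_apply, Fin.append_left, Fin.append_right]
      ring
    · convert Matrix.posSemidef_vecMulVec_self_star
        (Sum.elim (Fin.append u.1 u.2.1) (fun _ : Unit => (1:ℝ))) using 1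
      ext i j
      rcases i with i | i <;> rcases j with j | j <;> simp [Matrix.vecMulVec_apply]
  obtain ⟨H, h1, h2⟩ := hH
  refine ⟨(p.1, p.2.1, H, p.2.2), ?_, rfl⟩
  rw [Set.mem_iInter]
  intro k
  rw [hT k]
  exact ⟨hlin k, h1, h2⟩
end

section
/- Let n₁, n₂, m be positive integers, let E ⊆ {1,…,n₁} × {1,…,n₂}, and for each k ∈ {1,…,m} let Q_k ∈ ℝ^{n₁×n₂}, a_k ∈ ℝ^{n₁}, b_k ∈ ℝ^{n₂}, c_k ∈ ℝ. For each k, let S^k = {(x,y,w) ∈ [0,1]^{n₁+n₂+|E|} : Σ_{(i,j)∈E}(Q_k)_{ij} w_{ij} + a_kᵀx + b_kᵀy + c_k = 0 and w_{ij} = x_i y_j for all (i,j) ∈ E}, and let T^k be the set of tuples (x,y,H,w) with x ∈ ℝ^{n₁}, y ∈ ℝ^{n₂}, H ∈ ℝ^{(n₁+n₂)×(n₁+n₂)}, w ∈ ℝ^{E}, such that Σ_{(i,j)∈E}(Q_k)_{ij} w_{ij} + a_kᵀx + b_kᵀy + c_k = 0, w_{ij} = ½(H_{i,(j+n₁)}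 + H_{(j+n₁),i}) for all (i,j) ∈ E, and the block matrix [[H, z],[zᵀ, 1]] with z = (x,y) is positive semidefinite. Define S^{SDP} = ⋂_{k=1}^m T^k, S^{SOCP} = ⋂_{k=1}^m conv(S^k), and S^{QBP} = {(x,y,w) ∈ [0,1]^{n₁+n₂+|E|} : Σ_{(i,j)∈E}(Q_k)_{ij} w_{ij} + a_kᵀx + b_kᵀy + c_k = 0 for all k ∈ {1,…,m}} ∩ conv({(x,y,w) ∈ [0,1]^{n₁+n₂+|E|} : w_{ij} = x_i y_j for all (i,j) ∈ E}). Then proj_{x,y,w}(S^{SDP}) ∩ S^{QBP} ⊇ S^{SOCP}, where proj_{x,y,w} denotes the image under the map (x,y,H,w) ↦ (x,y,w). -/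
theorem aux_convex_G (n₁ n₂ : ℕ) (E : Finset (Fin n₁ × Fin n₂)) :
    Convex ℝ {p : (Fin n₁ → ℝ) × (Fin n₂ → ℝ) × (↥E → ℝ) |
      ∃ H : Matrix (Fin (n₁ + n₂)) (Fin (n₁ + n₂)) ℝ,
        (∀ e : ↥E, p.2.2 e = (H (Fin.castAdd n₂ (e : Fin n₁ × Fin n₂).1)
            (Fin.natAdd n₁ (e : Fin n₁ × Fin n₂).2) +
          H (Fin.natAdd n₁ (e : Fin n₁ × Fin n₂).2)
            (Fin.castAdd n₂ (e : Fin n₁ × Fin n₂).1)) / 2) ∧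
        (Matrix.fromBlocks H
          (Matrix.of fun i (_ : Unit) => Fin.append p.1 p.2.1 i)
          (Matrix.of fun (_ : Unit) j => Fin.append p.1 p.2.1 j)
          (1 : Matrix Unit Unit ℝ)).PosSemidef} := by
  rintro ⟨x, y, w⟩ ⟨H, h1, h2⟩ ⟨x', y', w'⟩ ⟨H', h1', h2'⟩ s t hs ht hst
  refine ⟨s • H + t • H', ?_, ?_⟩
  · intro e
    have := h1 e
    have := h1' e
    simp only [Prod.snd_add, Prod.smul_snd, Pi.add_apply, Pi.smul_apply, Matrix.add_apply,
      Matrix.smul_apply, smul_eq_mul] at *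
    rw [h1 e, h1' e]; ring
  · have hz : ∀ i, Fin.append (s • x + t • x') (s • y + t • y') i =
        s * Fin.append x y i + t * Fin.append x' y' i := by
      intro i
      refine Fin.addCases (fun i => ?_) (fun i => ?_) i <;> simp
    convert (h2.smul hs).add (h2'.smul ht) using 1
    ext i j
    rcases i with i | i <;> rcases j with j | j <;> simp [hz, hst]

theorem aux_psd (n : ℕ) (z : Fin n → ℝ) :
    (Matrix.fromBlocks (Matrix.vecMulVec z z)
          (Matrix.of fun i (_ : Unit) => z i)
          (Matrix.of fun (_ : Unit) j => z j)
          (1 : Matrix Unit Unit ℝ)).PosSemidef := by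
  convert Matrix.posSemidef_vecMulVec_self_star (Sum.elim z (fun _ : Unit => (1:ℝ))) using 1
  ext i j
  rcases i with i | i <;> rcases j with j | j <;> simp [Matrix.vecMulVec_apply]

theorem aux_convex_L (n₁ n₂ : ℕ) (E : Finset (Fin n₁ × Fin n₂))
    (q : ↥E → ℝ) (a : Fin n₁ → ℝ) (b : Fin n₂ → ℝ) (c : ℝ) :
    Convex ℝ {p : (Fin n₁ → ℝ) × (Fin n₂ → ℝ) × (↥E → ℝ) |
      (∀ i, p.1 i ∈ Set.Icc (0:ℝ) 1) ∧ (∀ j, p.2.1 j ∈ Set.Icc (0:ℝ) 1) ∧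
      (∀ e : ↥E, p.2.2 e ∈ Set.Icc (0:ℝ) 1) ∧
      (∑ e : ↥E, q e * p.2.2 e) + (∑ i, a i * p.1 i) + (∑ j, b j * p.2.1 j) + c = 0} := by
  rintro ⟨x, y, w⟩ ⟨h1, h2, h3, h4⟩ ⟨x', y', w'⟩ ⟨h1', h2', h3', h4'⟩ s t hs ht hst
  refine ⟨fun i => convex_Icc (0:ℝ) 1 (h1 i) (h1' i) hs ht hst,
    fun i => convex_Icc (0:ℝ) 1 (h2 i) (h2' i) hs ht hst,
    fun i => convex_Icc (0:ℝ) 1 (h3 i) (h3' i) hs ht hst, ?_⟩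
  have key : ∀ {ι : Type} [Fintype ι] (f u v : ι → ℝ),
      ∑ i, f i * (s * u i + t * v i) = s * ∑ i, f i * u i + t * ∑ i, f i * v i := by
    intro ι _ f u v
    rw [Finset.mul_sum, Finset.mul_sum, ← Finset.sum_add_distrib]
    exact Finset.sum_congr rfl fun i _ => by ring
  simp only [Prod.snd_add, Prod.smul_snd, Prod.fst_add, Prod.smul_fst, Pi.add_apply,
    Pi.smul_apply, smul_eq_mul, key] at *
  linear_combination s * h4 + t * h4' - c * hst

/-- **Theorem 2.** The intersection of the projected SDP relaxation with the
Boolean-quadric-polytope relaxation contains the SOCP relaxation: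
`proj_{x,y,w}(S^{SDP}) ∩ S^{QBP} ⊇ S^{SOCP}`. -/
theorem proj_SDP_inter_QBP_supset_SOCP (n₁ n₂ m : ℕ) (hn₁ : 0 < n₁) (hn₂ : 0 < n₂) (hm : 0 < m)
    (E : Finset (Fin n₁ × Fin n₂))
    (Q : Fin m → Matrix (Fin n₁) (Fin n₂) ℝ) (a : Fin m → Fin n₁ → ℝ)
    (b : Fin m → Fin n₂ → ℝ) (c : Fin m → ℝ)
    (S : Fin m → Set ((Fin n₁ → ℝ) × (Fin n₂ → ℝ) × (↥E → ℝ)))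
    (hS : ∀ k, S k = {p | (∀ i, p.1 i ∈ Set.Icc (0:ℝ) 1) ∧ (∀ j, p.2.1 j ∈ Set.Icc (0:ℝ) 1) ∧
        (∀ e : ↥E, p.2.2 e ∈ Set.Icc (0:ℝ) 1) ∧
        (∑ e : ↥E, Q k (e : Fin n₁ × Fin n₂).1 (e : Fin n₁ × Fin n₂).2 * p.2.2 e) +
          (∑ i, a k i * p.1 i) + (∑ j, b k j * p.2.1 j) + c k = 0 ∧
        ∀ e : ↥E, p.2.2 e = p.1 (e : Fin n₁ × Fin n₂).1 * p.2.1 (e : Fin n₁ × Fin n₂).2})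
    (T : Fin m → Set ((Fin n₁ → ℝ) × (Fin n₂ → ℝ) ×
        Matrix (Fin (n₁ + n₂)) (Fin (n₁ + n₂)) ℝ × (↥E → ℝ)))
    (hT : ∀ k, T k = {p | (∑ e : ↥E, Q k (e : Fin n₁ × Fin n₂).1 (e : Fin n₁ × Fin n₂).2 *
            p.2.2.2 e) + (∑ i, a k i * p.1 i) + (∑ j, b k j * p.2.1 j) + c k = 0 ∧
        (∀ e : ↥E, p.2.2.2 e = (p.2.2.1 (Fin.castAdd n₂ (e : Fin n₁ × Fin n₂).1)
            (Fin.natAdd n₁ (e : Fin n₁ × Fin n₂).2) +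
          p.2.2.1 (Fin.natAdd n₁ (e : Fin n₁ × Fin n₂).2)
            (Fin.castAdd n₂ (e : Fin n₁ × Fin n₂).1)) / 2) ∧
        (Matrix.fromBlocks p.2.2.1
          (Matrix.of fun i (_ : Unit) => Fin.append p.1 p.2.1 i)
          (Matrix.of fun (_ : Unit) j => Fin.append p.1 p.2.1 j)
          (1 : Matrix Unit Unit ℝ)).PosSemidef}) :
    (⋂ k, convexHull ℝ (S k)) ⊆
      ((fun p : (Fin n₁ → ℝ) × (Fin n₂ → ℝ) ×
            Matrix (Fin (n₁ + n₂)) (Fin (n₁ + n₂)) ℝ × (↥E → ℝ) =>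
          (p.1, p.2.1, p.2.2.2)) '' ⋂ k, T k) ∩
        (({p : (Fin n₁ → ℝ) × (Fin n₂ → ℝ) × (↥E → ℝ) |
            (∀ i, p.1 i ∈ Set.Icc (0:ℝ) 1) ∧ (∀ j, p.2.1 j ∈ Set.Icc (0:ℝ) 1) ∧
            (∀ e : ↥E, p.2.2 e ∈ Set.Icc (0:ℝ) 1) ∧
            ∀ k, (∑ e : ↥E, Q k (e : Fin n₁ × Fin n₂).1 (e : Fin n₁ × Fin n₂).2 * p.2.2 e) +
              (∑ i, a k i * p.1 i) + (∑ j, b k j * p.2.1 j) + c k = 0} ∩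
          convexHull ℝ {p : (Fin n₁ → ℝ) × (Fin n₂ → ℝ) × (↥E → ℝ) |
            (∀ i, p.1 i ∈ Set.Icc (0:ℝ) 1) ∧ (∀ j, p.2.1 j ∈ Set.Icc (0:ℝ) 1) ∧
            (∀ e : ↥E, p.2.2 e ∈ Set.Icc (0:ℝ) 1) ∧
            ∀ e : ↥E, p.2.2 e = p.1 (e : Fin n₁ × Fin n₂).1 *
              p.2.1 (e : Fin n₁ × Fin n₂).2})) := by
  intro p hp
  rw [Set.mem_iInter] at hp
  have hL : ∀ k, _ := fun k => convexHull_min (s := S k) (by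
    rw [hS k]
    rintro p ⟨h1, h2, h3, h4, -⟩
    exact ⟨h1, h2, h3, h4⟩) (aux_convex_L n₁ n₂ E (fun e => Q k e.1.1 e.1.2) (a k) (b k) (c k))
      (hp k)
  have hG := convexHull_min (s := S ⟨0, hm⟩) (by
    rw [hS]
    rintro p ⟨-, -, -, -, h5⟩
    refine ⟨Matrix.vecMulVec (Fin.append p.1 p.2.1) (Fin.append p.1 p.2.1), ?_, aux_psd _ _⟩
    intro e
    rw [h5 e]
    simp [Matrix.vecMulVec_apply]
    ring) (aux_convex_G n₁ n₂ E) (hp ⟨0, hm⟩)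
  obtain ⟨H, hH1, hH2⟩ := hG
  refine ⟨⟨(p.1, p.2.1, H, p.2.2), ?_, rfl⟩, ⟨?_, ?_⟩⟩
  · rw [Set.mem_iInter]
    intro k
    rw [hT k]
    exact ⟨(hL k).2.2.2, hH1, hH2⟩
  · exact ⟨(hL ⟨0, hm⟩).1, (hL ⟨0, hm⟩).2.1, (hL ⟨0, hm⟩).2.2.1, fun k => (hL k).2.2.2⟩
  · refine convexHull_mono ?_ (hp ⟨0, hm⟩)
    rw [hS]
    rintro p ⟨h1, h2, h3, -, h5⟩
    exact ⟨h1, h2, h3, h5⟩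
end
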